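/- arXiv:2008.05430 — 6 statements merged into one kernel-verified Lean document; each statement's English description precedes it below -/
import Mathlib

section
/- Let k ≥ l ≥ 1 be integers. Then for every ε > 0 there exists a finite oriented graph G with s(G) ≥ OPT(k,l) − ε; that is, the supremum of s(G) over all finite oriented graphs G is at least OPT(k,l). -/
open scoped BigOperators

/-- The arc relation of the oriented star `S_{k,l}` on `Fin (k+l+1)`:
vertex `0` is the center, vertices `1,…,k` are the out-leaves and
vertices `k+1,…,k+l` are the in-leaves. -/
def StarArc (k l : ℕ) (a b : Fin (k + l + 1)) : Prop :=
  (a.val = 0 ∧ 1 ≤ b.val ∧ b.val ≤ k) ∨ (b.val = 0 ∧ k + 1 ≤ a.val)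

/-- `φ` witnesses an induced copy of `S_{k,l}` in the digraph with arc relation `A`:
it is injective and maps arcs to arcs and non-arcs to non-arcs. -/
def IsStarEmb (k l : ℕ) {V : Type*} (A : V → V → Prop) (φ : Fin (k + l + 1) → V) : Prop :=
  Function.Injective φ ∧ ∀ a b, StarArc k l a b ↔ A (φ a) (φ b)

/-- `s(G)`: the probability that a uniformly random map `V(S_{k,l}) → V(G)`
induces a copy of `S_{k,l}`. -/
noncomputable def starProb (k l : ℕ) (V : Type*) [Fintype V] (A : V → V → Prop) : ℝ :=
  (Nat.card {φ : Fin (k + l + 1) → V // IsStarEmb k l A φ} : ℝ) /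
    (Fintype.card V : ℝ) ^ (k + l + 1)

/-- The probability that a uniformly random map induces a copy of `S_{k,l}`
and moreover has property `P`. -/
noncomputable def starProbOn (k l : ℕ) {V : Type*} [Fintype V] (A : V → V → Prop)
    (P : (Fin (k + l + 1) → V) → Prop) : ℝ :=
  (Nat.card {φ : Fin (k + l + 1) → V // IsStarEmb k l A φ ∧ P φ} : ℝ) /
    (Fintype.card V : ℝ) ^ (k + l + 1)

/-- `s(z→v) = Pr[φ ∈ 𝒮 | φ z = v]`. -/
noncomputable def sCond (k l : ℕ) {V : Type*} [Fintype V] (A : V → V → Prop)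
    (z : Fin (k + l + 1)) (v : V) : ℝ :=
  (Nat.card {φ : Fin (k + l + 1) → V // IsStarEmb k l A φ ∧ φ z = v} : ℝ) /
    (Fintype.card V : ℝ) ^ (k + l)

/-- `Pr[φ ∈ 𝒮 ∧ P φ | φ(c) = v]`, where `c = 0` is the center of the star. -/
noncomputable def sCondOn (k l : ℕ) {V : Type*} [Fintype V] (A : V → V → Prop) (v : V)
    (P : (Fin (k + l + 1) → V) → Prop) : ℝ :=
  (Nat.card {φ : Fin (k + l + 1) → V // IsStarEmb k l A φ ∧ φ 0 = v ∧ P φ} : ℝ) /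
    (Fintype.card V : ℝ) ^ (k + l)

open Fin.NatCast in
/-- `s(v) = (s(c→v) + l·s(i→v) + k·s(o→v))/(m+1)`, where the center is `0`,
`k+1` is an in-leaf and `1` is an out-leaf. -/
noncomputable def sVert (k l : ℕ) {V : Type*} [Fintype V] (A : V → V → Prop) (v : V) : ℝ :=
  (sCond k l A 0 v + l * sCond k l A ((k + 1 : ℕ) : Fin (k + l + 1)) v
      + k * sCond k l A 1 v) / ((k : ℝ) + l + 1)

/-- `ρ(v)`: the proportion of vertices adjacent to `v`. -/
noncomputable def rho {V : Type*} [Fintype V] (A : V → V → Prop) (v : V) : ℝ :=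
  (Nat.card {u : V // A v u ∨ A u v} : ℝ) / (Fintype.card V : ℝ)

/-- `ρ⁺_B(v)`: the proportion of vertices that are out-neighbours of `v` lying in `B`. -/
noncomputable def rhoPIn {V : Type*} [Fintype V] (A : V → V → Prop) (B : Set V) (v : V) : ℝ :=
  (Nat.card {u : V // A v u ∧ u ∈ B} : ℝ) / (Fintype.card V : ℝ)

/-- `ρ⁻_B(v)`: the proportion of vertices that are in-neighbours of `v` lying in `B`. -/
noncomputable def rhoMIn {V : Type*} [Fintype V] (A : V → V → Prop) (B : Set V) (v : V) : ℝ :=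
  (Nat.card {u : V // A u v ∧ u ∈ B} : ℝ) / (Fintype.card V : ℝ)

/-- `ρ_B(v)`: the proportion of vertices adjacent to `v` lying in `B`. -/
noncomputable def rhoIn {V : Type*} [Fintype V] (A : V → V → Prop) (B : Set V) (v : V) : ℝ :=
  (Nat.card {u : V // (A v u ∨ A u v) ∧ u ∈ B} : ℝ) / (Fintype.card V : ℝ)

/-- `μ(B) = |B|/n`. -/
noncomputable def muSet {V : Type*} [Fintype V] (B : Set V) : ℝ :=
  (Nat.card B : ℝ) / (Fintype.card V : ℝ)

/-- `X`: the set of vertices of large degree, `ρ(v) ≥ 1/2`. -/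
def bigX {V : Type*} [Fintype V] (A : V → V → Prop) : Set V := {v | 1 / 2 ≤ rho A v}

/-- `Y = V(G) \ X`. -/
def bigY {V : Type*} [Fintype V] (A : V → V → Prop) : Set V := (bigX A)ᶜ

/-- `α = μ(X)`. -/
noncomputable def alphaX {V : Type*} [Fintype V] (A : V → V → Prop) : ℝ := muSet (bigX A)

/-- `D = min_{x ∈ X} ρ(x)`. -/
noncomputable def Dmin {V : Type*} [Fintype V] (A : V → V → Prop) : ℝ :=
  sInf (rho A '' bigX A)

/-- `β = max_{y ∈ Y} ρ_Y(y)`. -/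
noncomputable def betaY {V : Type*} [Fintype V] (A : V → V → Prop) : ℝ :=
  sSup ((fun y => rhoIn A (bigY A) y) '' bigY A)

/-- `γ = min_{x ∈ X} ρ⁻_Y(x)`. -/
noncomputable def gammaX {V : Type*} [Fintype V] (A : V → V → Prop) : ℝ :=
  sInf ((fun x => rhoMIn A (bigY A) x) '' bigX A)

/-- `S = (m+1)·min_{v ∈ V(G)} s(v)`. -/
noncomputable def Smin (k l : ℕ) {V : Type*} [Fintype V] (A : V → V → Prop) : ℝ :=
  ((k : ℝ) + l + 1) * sInf (Set.range (sVert k l A))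

/-- `S₁ = min_{x ∈ X} (ρ⁺_Y(x))^k (ρ⁻_Y(x))^l`. -/
noncomputable def S1min (k l : ℕ) {V : Type*} [Fintype V] (A : V → V → Prop) : ℝ :=
  sInf ((fun x => rhoPIn A (bigY A) x ^ k * rhoMIn A (bigY A) x ^ l) '' bigX A)

/-- `S₂ = S₁ − ((m−1)/((m+1)·C(m,k)))·(α+β)(1−α)(1−D)^{m−2}`. -/
noncomputable def S2min (k l : ℕ) {V : Type*} [Fintype V] (A : V → V → Prop) : ℝ :=
  S1min k l A - (((k : ℝ) + l - 1) / (((k : ℝ) + l + 1) * (Nat.choose (k + l) k : ℝ)))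
    * (alphaX A + betaY A) * (1 - alphaX A) * (1 - Dmin A) ^ (k + l - 2)

/-- `λ₀ = k^k l^l / m^m`. -/
noncomputable def lam0 (k l : ℕ) : ℝ := (k : ℝ) ^ k * (l : ℝ) ^ l / ((k : ℝ) + l) ^ (k + l)

/-- `λ₁ = k^k l (l−1)^{l−1} / (m−1)^{m−1}` (with the convention `0⁰ = 1`). -/
noncomputable def lam1 (k l : ℕ) : ℝ :=
  (k : ℝ) ^ k * (l : ℝ) * ((l : ℝ) - 1) ^ (l - 1) / ((k : ℝ) + l - 1) ^ (k + l - 1)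

/-- The edge density `ρ(Z)` of a set of vertices `Z`: the number of unordered adjacent
pairs in `Z` divided by `C(|Z|,2)`. -/
noncomputable def densSet {V : Type*} [Fintype V] (A : V → V → Prop) (Z : Set V) : ℝ :=
  ((Nat.card {p : V × V // p.1 ∈ Z ∧ p.2 ∈ Z ∧ (A p.1 p.2 ∨ A p.2 p.1)} : ℝ) / 2) /
    (Nat.choose (Nat.card Z) 2 : ℝ)

/-- `d = 1 − (E_{x ∈ X} ρ⁻_Y(x))/(1−α)`. -/
noncomputable def dXY {V : Type*} [Fintype V] (A : V → V → Prop) : ℝ :=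
  1 - ((∑ᶠ x ∈ bigX A, rhoMIn A (bigY A) x) / (Nat.card (bigX A) : ℝ)) / (1 - alphaX A)

/-- `OPT(k,l)`. -/
noncomputable def OPT (k l : ℕ) : ℝ :=
  if k = l then
    (1 / 2 ^ (2 * k)) *
      sSup {y : ℝ | ∃ a ∈ Set.Icc (0 : ℝ) 1, y = a * (1 - a) ^ (2 * k) + (1 - a) * a ^ (2 * k)}
  else
    sSup {y : ℝ | ∃ a ∈ Set.Icc (0 : ℝ) (1 / 2),
      ∃ d ∈ Set.Icc (0 : ℝ) ((k : ℝ) / ((k : ℝ) + (l : ℝ))),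
      y = a * (1 - a) ^ (k + l) * d ^ k * (1 - d) ^ l
        + (((k : ℝ) - 1) ^ (k - 1) * (l : ℝ) ^ l / ((k : ℝ) + (l : ℝ) - 1) ^ (k + l - 1))
          * (1 - a) * a ^ (k + l) * (1 - d)}

open Filter Topology in
/-- Non-injective version of the star embedding. -/
def IsStarHom (k l : ℕ) {V : Type*} (A : V → V → Prop) (φ : Fin (k + l + 1) → V) : Prop :=
  ∀ a b, StarArc k l a b ↔ A (φ a) (φ b)

theorem blowup_card (k l N : ℕ) {V : Type} [Fintype V] (A : V → V → Prop) (n : ℕ)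
    (e : Fin n ≃ V × Fin N) :
    Nat.card {ψ : Fin (k + l + 1) → V // IsStarHom k l A ψ} * N.descFactorial (k + l + 1) ≤
      Nat.card {φ : Fin (k + l + 1) → Fin n //
        IsStarEmb k l (fun u v => A (e u).1 (e v).1) φ} := by
  have h1 : N.descFactorial (k + l + 1) = Nat.card (Fin (k + l + 1) ↪ Fin N) := by
    rw [Nat.card_eq_fintype_card, Fintype.card_embedding_eq]; simp
  rw [h1, ← Nat.card_prod]
  refine Nat.card_le_card_of_injective
    (fun p => ⟨fun z => e.symm (p.1.1 z, p.2 z), ?_, ?_⟩) ?_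
  · intro z w h
    have := e.symm.injective h
    exact p.2.injective (Prod.ext_iff.1 this).2
  · intro a b
    simpa using p.1.2 a b
  · rintro ⟨⟨ψ, hψ⟩, η⟩ ⟨⟨ψ', hψ'⟩, η'⟩ h
    have h' : ∀ z, (ψ z, η z) = (ψ' z, η' z) := fun z =>
      e.symm.injective (congrFun (Subtype.ext_iff.1 h) z)
    have a1 : ψ = ψ' := funext fun z => (Prod.ext_iff.1 (h' z)).1
    have a2 : η = η' := DFunLike.ext _ _ fun z => (Prod.ext_iff.1 (h' z)).2
    subst a1 a2
    rfl

theorem desc_tendsto (r : ℕ) :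
    Filter.Tendsto (fun M : ℕ => (((M + r).descFactorial r : ℝ)) / ((M + r : ℕ) : ℝ) ^ r)
      Filter.atTop (nhds 1) := by
  have h0 : Filter.Tendsto (fun M : ℕ => ((1 + 1 * (M : ℝ)) / (r + 1 * (M : ℝ))) ^ r)
      Filter.atTop (nhds 1) := by
    have := (tendsto_add_mul_div_add_mul_atTop_nhds (𝕜 := ℝ) 1 r 1 (d := 1) one_ne_zero).pow r
    simpa using this
  refine tendsto_of_tendsto_of_tendsto_of_le_of_le h0 tendsto_const_nhds ?_ ?_
  · intro M
    simp only [div_pow]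
    have h1 : ((M + 1 : ℕ) : ℝ) ^ r ≤ ((M + r).descFactorial r : ℝ) := by
      have := Nat.pow_sub_le_descFactorial (M + r) r
      rw [show M + r + 1 - r = M + 1 by omega] at this
      exact_mod_cast this
    have : (1 + 1 * (M : ℝ)) = ((M + 1 : ℕ) : ℝ) := by push_cast; ring
    rw [this]
    have : ((r : ℝ) + 1 * (M : ℝ)) = ((M + r : ℕ) : ℝ) := by push_cast; ring
    rw [this]
    gcongr
  · intro M
    apply div_le_one_of_le₀
    · have h := Nat.descFactorial_le_pow (M + r) r
      rw [← Nat.cast_pow]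
      exact Nat.cast_le.2 h
    · positivity

theorem blowup (k l : ℕ) {V : Type} [Fintype V] [Nonempty V] (A : V → V → Prop)
    (hA : ∀ u, ¬ A u u) (hA2 : ∀ u v, A u v → ¬ A v u) (y : ℝ)
    (hy : y < (Nat.card {ψ : Fin (k + l + 1) → V // IsStarHom k l A ψ} : ℝ) /
      (Fintype.card V : ℝ) ^ (k + l + 1)) :
    ∃ (n : ℕ) (A : Fin n → Fin n → Prop), Irreflexive A ∧
      (∀ u v, A u v → ¬ A v u) ∧ 1 ≤ n ∧ y ≤ starProb k l (Fin n) A := by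
  set t : ℝ := (Nat.card {ψ : Fin (k + l + 1) → V // IsStarHom k l A ψ} : ℝ) /
      (Fintype.card V : ℝ) ^ (k + l + 1) with ht
  have h1 := (desc_tendsto (k + l + 1)).const_mul t
  rw [mul_one] at h1
  obtain ⟨M, hM⟩ := (h1.eventually (lt_mem_nhds hy)).exists
  set N := M + (k + l + 1) with hN
  let e : Fin (Fintype.card (V × Fin N)) ≃ V × Fin N := (Fintype.equivFin _).symm
  refine ⟨_, fun u v => A (e u).1 (e v).1, fun u => hA _, fun u v => hA2 _ _, ?_, ?_⟩
  · have : 0 < N := by omega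
    have : NeZero N := ⟨this.ne'⟩
    exact Fintype.card_pos
  · refine hM.le.trans ?_
    unfold starProb
    have hb := blowup_card k l N A _ e
    rw [ht, div_mul_div_comm, ← mul_pow]
    simp only [Fintype.card_fin, Fintype.card_prod, Nat.cast_mul]
    gcongr
    exact_mod_cast hb

theorem sum_le_card (k l : ℕ) {V : Type} [Fintype V] [DecidableEq V] (A : V → V → Prop)
    [DecidableRel A]
    (hA : ∀ u, ¬ A u u) (hA2 : ∀ u v, A u v → ¬ A v u)
    (hT : ∀ x y z, (A x y ∨ A y x) → (A x z ∨ A z x) → ¬ A y z) :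
    ∑ x : V, (Finset.univ.filter (fun y => A x y)).card ^ k *
      (Finset.univ.filter (fun y => A y x)).card ^ l ≤
      Nat.card {ψ : Fin (k + l + 1) → V // IsStarHom k l A ψ} := by
  classical
  have hcard : ∀ x : V, Nat.card {ψ : Fin (k + l + 1) → V // IsStarHom k l A ψ ∧ ψ 0 = x} ≥
      (Finset.univ.filter (fun y => A x y)).card ^ k *
      (Finset.univ.filter (fun y => A y x)).card ^ l := by
    intro x
    have : (Finset.univ.filter (fun y => A x y)).card ^ k *
      (Finset.univ.filter (fun y => A y x)).card ^ l =
      Nat.card ((Fin k → {y // A x y}) × (Fin l → {y // A y x})) := by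
      rw [Nat.card_eq_fintype_card]
      simp [Fintype.card_subtype]
    rw [this]
    refine Nat.card_le_card_of_injective (fun p => ⟨fun z =>
      (Fin.cons x (Fin.append (fun i => (p.1 i).1) (fun i => (p.2 i).1)) :
        Fin (k + l + 1) → V) z, ?_, ?_⟩) ?_
    · intro a b
      refine Fin.cases ?_ (fun a => ?_) a <;> refine Fin.cases ?_ (fun b => ?_) b
      · simp [StarArc, hA]
      · refine Fin.addCases (fun b => ?_) (fun b => ?_) b
        · have := (p.1 b).2
          simp [StarArc, this]
        · have := hA2 _ _ (p.2 b).2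
          simp [StarArc, this]
      · refine Fin.addCases (fun b => ?_) (fun b => ?_) a
        · have := hA2 _ _ (p.1 b).2
          simp [StarArc, this]
        · have := (p.2 b).2
          simp [StarArc, this]
      · have hL : ∀ c : Fin (k + l), A x ((Fin.append (fun i => (p.1 i).1) (fun i => (p.2 i).1) :
            Fin (k + l) → V) c) ∨ A ((Fin.append (fun i => (p.1 i).1) (fun i => (p.2 i).1) :
            Fin (k + l) → V) c) x := by
          intro c
          refine Fin.addCases (fun b => ?_) (fun b => ?_) c
          · left; simpa using (p.1 b).2
          · right; simpa using (p.2 b).2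
        have := hT x _ _ (hL a) (hL b)
        simp [StarArc, this]
    · simp
    · rintro ⟨f, g⟩ ⟨f', g'⟩ h
      have h' := Subtype.ext_iff.1 h
      simp only at h'
      have h2 : ∀ c, (Fin.append (fun i => (f i).1) (fun i => (g i).1) :
            Fin (k + l) → V) c = (Fin.append (fun i => (f' i).1) (fun i => (g' i).1) :
            Fin (k + l) → V) c := fun c => by
        have := congrFun h' c.succ
        simpa using this
      refine Prod.ext (funext fun i => Subtype.ext ?_) (funext fun i => Subtype.ext ?_)
      · simpa using h2 (Fin.castAdd l i)
      · simpa using h2 (Fin.natAdd k i)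
  refine (Finset.sum_le_sum fun x _ => hcard x).trans ?_
  rw [← Nat.card_sigma]
  refine Nat.card_le_card_of_injective (fun p => ⟨p.2.1, p.2.2.1⟩) ?_
  rintro ⟨x, f, hf, hx⟩ ⟨x', f', hf', hx'⟩ h
  have : f = f' := Subtype.ext_iff.1 h
  subst this
  subst hx hx'
  rfl

/-- The bipartite construction. -/
def BA {N : ℕ} {G : Type} [Add G] (a b : ℕ) (S : Finset G) (p q : Fin N × G) : Prop :=
  (a ≤ p.1.val ∧ p.1.val < a + b ∧ q.1.val < a ∧ p.2 + q.2 ∈ S) ∨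
  (p.1.val < a ∧ a ≤ q.1.val ∧ ¬ (q.1.val < a + b ∧ p.2 + q.2 ∈ S))

theorem card_fin_filter (N : ℕ) (P : ℕ → Prop) [DecidablePred P] :
    (Finset.univ.filter (fun v : Fin N => P v.val)).card = ((Finset.range N).filter P).card := by
  rw [Finset.card_filter, Finset.card_filter]
  exact Fin.sum_univ_eq_sum_range (fun v => if P v then 1 else 0) N

theorem card_shift {G : Type} [AddCommGroup G] [Fintype G] [DecidableEq G] (S : Finset G) (i : G) :
    (Finset.univ.filter (fun j => i + j ∈ S)).card = S.card := by
  have : (Finset.univ.filter (fun j => i + j ∈ S)) = S.map (Equiv.addLeft (-i)).toEmbedding := by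
    ext j
    simp
  rw [this, Finset.card_map]

theorem card_shift_compl {G : Type} [AddCommGroup G] [Fintype G] [DecidableEq G] (S : Finset G)
    (i : G) :
    (Finset.univ.filter (fun j => i + j ∉ S)).card = Fintype.card G - S.card := by
  rw [← Finset.card_compl, ← card_shift Sᶜ i]
  simp

theorem BA_sum (k l a b c t s q : ℕ) {G : Type} [AddCommGroup G] [Fintype G] [DecidableEq G]
    (S : Finset G) (hS : S.card = t) (hG : Fintype.card G = q) (hts : t + s = q) :
    a * q * ((b * s + c * q) ^ k * (b * t) ^ l) + b * q * ((a * t) ^ k * (a * s) ^ l) ≤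
    Nat.card {ψ : Fin (k + l + 1) → (Fin (a + b + c) × G) //
      IsStarHom k l (BA (N := a + b + c) a b S) ψ} := by
  classical
  have hs : Fintype.card G - S.card = s := by omega
  have c1 : ((Finset.range (a + b + c)).filter (fun v => v < a)).card = a := by
    rw [show (Finset.range (a + b + c)).filter (fun v => v < a) = Finset.range a by
      ext; simp; omega]
    simp
  have c2 : ((Finset.range (a + b + c)).filter (fun v => a ≤ v ∧ v < a + b)).card = b := by
    rw [show (Finset.range (a + b + c)).filter (fun v => a ≤ v ∧ v < a + b) = Finset.Ico a (a+b) by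
      ext; simp; omega]
    simp
  have c3 : ((Finset.range (a + b + c)).filter (fun v => a + b ≤ v)).card = c := by
    rw [show (Finset.range (a + b + c)).filter (fun v => a + b ≤ v)
        = Finset.Ico (a + b) (a + b + c) by
      ext; simp; omega]
    simp
  rw [← card_fin_filter] at c1 c2 c3
  refine le_trans ?_ (sum_le_card k l (BA (N := a + b + c) a b S) ?_ ?_ ?_)
  · let f : ℕ → ℕ := fun u => if u < a then (b * s + c * q) ^ k * (b * t) ^ l else
      if u < a + b then (a * t) ^ k * (a * s) ^ l else 0
    have hf : ∀ p : Fin (a + b + c) × G, f p.1.val ≤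
        (Finset.univ.filter (fun y => BA a b S p y)).card ^ k *
        (Finset.univ.filter (fun y => BA a b S y p)).card ^ l := by
      rintro ⟨u, i⟩
      simp only [f]
      split_ifs with h1 h2
      · have e1 : (Finset.univ.filter (fun y => BA (N := a + b + c) a b S (u, i) y)).card
            = b * s + c * q := by
          have : (Finset.univ.filter (fun y => BA (N := a + b + c) a b S (u, i) y)) =
            ((Finset.univ.filter (fun v : Fin (a + b + c) => a ≤ v.val ∧ v.val < a + b)) ×ˢ
              (Finset.univ.filter (fun j => i + j ∉ S))) ∪
            ((Finset.univ.filter (fun v : Fin (a + b + c) => a + b ≤ v.val)) ×ˢ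
              (Finset.univ : Finset G)) := by
            ext ⟨v, j⟩
            simp [BA]
            by_cases hh : i + j ∈ S <;> simp [hh] <;> omega
          rw [this, Finset.card_union_of_disjoint, Finset.card_product, Finset.card_product,
            c2, c3, card_shift_compl, hs, Finset.card_univ, hG]
          rw [Finset.disjoint_left]
          rintro ⟨v, j⟩
          simp
          intros
          omega
        have e2 : (Finset.univ.filter (fun y => BA (N := a + b + c) a b S y (u, i))).card
            = b * t := by
          have : (Finset.univ.filter (fun y => BA (N := a + b + c) a b S y (u, i))) =
            ((Finset.univ.filter (fun v : Fin (a + b + c) => a ≤ v.val ∧ v.val < a + b)) ×ˢ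
              (Finset.univ.filter (fun j => i + j ∈ S))) := by
            ext ⟨v, j⟩
            simp [BA, add_comm]
            by_cases hh : i + j ∈ S <;> simp [hh] <;> omega
          rw [this, Finset.card_product, c2, card_shift, hS]
        rw [e1, e2]
      · have e1 : (Finset.univ.filter (fun y => BA (N := a + b + c) a b S (u, i) y)).card
            = a * t := by
          have : (Finset.univ.filter (fun y => BA (N := a + b + c) a b S (u, i) y)) =
            ((Finset.univ.filter (fun v : Fin (a + b + c) => v.val < a)) ×ˢ
              (Finset.univ.filter (fun j => i + j ∈ S))) := by
            ext ⟨v, j⟩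
            simp [BA]
            by_cases hh : i + j ∈ S <;> simp [hh] <;> omega
          rw [this, Finset.card_product, c1, card_shift, hS]
        have e2 : (Finset.univ.filter (fun y => BA (N := a + b + c) a b S y (u, i))).card
            = a * s := by
          have : (Finset.univ.filter (fun y => BA (N := a + b + c) a b S y (u, i))) =
            ((Finset.univ.filter (fun v : Fin (a + b + c) => v.val < a)) ×ˢ
              (Finset.univ.filter (fun j => i + j ∉ S))) := by
            ext ⟨v, j⟩
            simp [BA, add_comm]
            by_cases hh : i + j ∈ S <;> simp [hh] <;> omega
          rw [this, Finset.card_product, c1, card_shift_compl, hs]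
        rw [e1, e2]
      · exact Nat.zero_le _
    refine le_trans (le_of_eq ?_) (Finset.sum_le_sum fun p _ => hf p)
    rw [Fintype.sum_prod_type]
    simp only [Finset.sum_const, Finset.card_univ, hG, smul_eq_mul]
    rw [Fin.sum_univ_eq_sum_range (fun u => q * f u), ← Finset.mul_sum,
      Finset.sum_range_add, Finset.sum_range_add]
    have s1 : ∑ x ∈ Finset.range a, f x = a * ((b * s + c * q) ^ k * (b * t) ^ l) := by
      rw [Finset.sum_congr rfl (g := fun _ => (b * s + c * q) ^ k * (b * t) ^ l)]
      · simp
      · intro x hx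
        simp [f, Finset.mem_range.1 hx]
    have s2 : ∑ x ∈ Finset.range b, f (a + x) = b * ((a * t) ^ k * (a * s) ^ l) := by
      rw [Finset.sum_congr rfl (g := fun _ => (a * t) ^ k * (a * s) ^ l)]
      · simp
      · intro x hx
        simp [f, Finset.mem_range.1 hx]
    have s3 : ∑ x ∈ Finset.range c, f (a + b + x) = 0 := by
      apply Finset.sum_eq_zero
      intro x hx
      simp [f, show ¬ (a + b + x < a) by omega]
    rw [s1, s2, s3]
    ring
  · rintro ⟨u, i⟩
    simp [BA]; omega
  · rintro ⟨u, i⟩ ⟨v, j⟩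
    simp [BA, add_comm j i]
    by_cases hh : i + j ∈ S <;> simp [hh] <;> omega
  · rintro ⟨u, i⟩ ⟨v, j⟩ ⟨w, m⟩
    simp only [BA]
    omega

theorem BA_oriented {N : ℕ} {G : Type} [AddCommGroup G] (a b : ℕ) (S : Finset G) :
    (∀ u : Fin N × G, ¬ BA a b S u u) ∧ (∀ u v : Fin N × G, BA a b S u v → ¬ BA a b S v u) := by
  classical
  constructor
  · rintro ⟨u, i⟩
    simp [BA]; omega
  · rintro ⟨u, i⟩ ⟨v, j⟩
    simp [BA, add_comm j i]
    by_cases hh : i + j ∈ S <;> simp [hh] <;> omega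

theorem realize (k l t s : ℕ) (hq : 0 < t + s) (α β : ℝ) (hα : 0 ≤ α) (hβ : 0 ≤ β)
    (hαβ : α + β ≤ 1) (y : ℝ)
    (hy : y < α * ((β * (s / (t + s)) + (1 - α - β)) ^ k * (β * (t / (t + s))) ^ l)
      + β * ((α * (t / (t + s))) ^ k * (α * (s / (t + s))) ^ l)) :
    ∃ (n : ℕ) (A : Fin n → Fin n → Prop), Irreflexive A ∧
      (∀ u v, A u v → ¬ A v u) ∧ 1 ≤ n ∧ y ≤ starProb k l (Fin n) A := by
  have f1 : Filter.Tendsto (fun N : ℕ => ((⌊α * N⌋₊ : ℝ) / (N : ℝ))) Filter.atTop (nhds α) :=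
    (tendsto_nat_floor_mul_div_atTop hα).comp tendsto_natCast_atTop_atTop
  have f2 : Filter.Tendsto (fun N : ℕ => ((⌊β * N⌋₊ : ℝ) / (N : ℝ))) Filter.atTop (nhds β) :=
    (tendsto_nat_floor_mul_div_atTop hβ).comp tendsto_natCast_atTop_atTop
  have hcont : Continuous (fun p : ℝ × ℝ =>
      p.1 * ((p.2 * ((s : ℝ) / (t + s)) + (1 - p.1 - p.2)) ^ k * (p.2 * ((t : ℝ) / (t + s))) ^ l)
      + p.2 * ((p.1 * ((t : ℝ) / (t + s))) ^ k * (p.1 * ((s : ℝ) / (t + s))) ^ l)) := by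
    fun_prop
  have f3 := (hcont.tendsto (α, β)).comp (f1.prodMk_nhds f2)
  obtain ⟨N, hN, hN0⟩ := ((f3.eventually (lt_mem_nhds hy)).and
    (Filter.eventually_gt_atTop 0)).exists
  simp only [Function.comp] at hN
  set a := ⌊α * N⌋₊ with ha
  set b := ⌊β * N⌋₊ with hb
  have hab : a + b ≤ N := by
    have h1 : (a : ℝ) ≤ α * N := Nat.floor_le (by positivity)
    have h2 : (b : ℝ) ≤ β * N := Nat.floor_le (by positivity)
    have : ((a + b : ℕ) : ℝ) ≤ N := by
      push_cast
      have : (α + β) * N ≤ 1 * N := by gcongr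
      linarith
    exact_mod_cast this
  obtain ⟨c, hc⟩ := Nat.exists_eq_add_of_le hab
  have : NeZero (t + s) := ⟨hq.ne'⟩
  obtain ⟨S, -, hS⟩ := Finset.exists_subset_card_eq (s := (Finset.univ : Finset (ZMod (t + s))))
    (n := t) (by simp [ZMod.card])
  have hsum := BA_sum k l a b c t s (t + s) S hS (ZMod.card _) rfl
  have : NeZero (a + b + c) := ⟨by omega⟩
  refine blowup k l (BA (N := a + b + c) a b S) (BA_oriented a b S).1 (BA_oriented a b S).2 y
    (hN.trans_le ?_)
  have hsum' : (((a * (t + s) * ((b * s + c * (t + s)) ^ k * (b * t) ^ l)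
    + b * (t + s) * ((a * t) ^ k * (a * s) ^ l) : ℕ)) : ℝ) ≤ _ := Nat.cast_le.2 hsum
  refine le_trans (le_of_eq ?_) (div_le_div_of_nonneg_right hsum' (by positivity))
  have hcard : (Fintype.card (Fin (a + b + c) × ZMod (t + s)) : ℝ) = N * (t + s) := by
    rw [Fintype.card_prod, Fintype.card_fin, ZMod.card, ← hc]; push_cast; ring
  rw [hcard]
  have hNp : (0 : ℝ) < N := by exact_mod_cast hN0
  have hQp : (0 : ℝ) < (t : ℝ) + s := by exact_mod_cast hq
  have hcN : (c : ℝ) = N - a - b := by rw [hc]; push_cast; ring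
  push_cast
  rw [hcN]
  generalize (N : ℝ) = n at *
  generalize hQ : (t : ℝ) + s = Q at *
  rw [show (b : ℝ) / n * (s / Q) + (1 - a / n - b / n) = (b * s + (n - a - b) * Q) / (n * Q) by
    field_simp,
    show (b : ℝ) / n * (t / Q) = (b * t) / (n * Q) by field_simp,
    show (a : ℝ) / n * (t / Q) = (a * t) / (n * Q) by field_simp,
    show (a : ℝ) / n * (s / Q) = (a * s) / (n * Q) by field_simp]
  rw [show (a : ℝ) / n = a * Q / (n * Q) by field_simp,
    show (b : ℝ) / n = b * Q / (n * Q) by field_simp]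
  simp only [div_pow, pow_succ, pow_add]
  field_simp

theorem num1 (n : ℕ) (hn : 2 ≤ n) : ((n : ℝ) + 2) ^ (n + 1) ≤ 2 ^ (n + 2) * (n : ℝ) ^ n := by
  rcases Nat.lt_or_ge n 4 with h | h
  · interval_cases n <;> norm_num
  · have hn0 : (0 : ℝ) < n := by positivity
    have h1 : (1 + 2 / (n : ℝ)) ^ n ≤ 7.4 := by
      have e1 : (1 + 2 / (n : ℝ)) ^ n ≤ Real.exp 2 := by
        have := Real.add_one_le_exp (2 / (n : ℝ))
        calc (1 + 2 / (n : ℝ)) ^ n ≤ (Real.exp (2 / n)) ^ n := by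
              gcongr; linarith
          _ = Real.exp 2 := by rw [← Real.exp_nat_mul]; congr 1; field_simp
      have e2 : Real.exp 2 = Real.exp 1 ^ 2 := by rw [← Real.exp_nat_mul]; norm_num
      have e3 := Real.exp_one_lt_d9
      have e4 := Real.exp_pos 1
      nlinarith
    have h2 : ((n : ℝ) + 2) * 7.4 ≤ 2 ^ (n + 2) := by
      clear h1
      induction n, h using Nat.le_induction with
      | base => norm_num
      | succ n hn ih =>
        have ih' := ih (by omega) (by positivity)
        rw [pow_succ]
        push_cast
        have : (0 : ℝ) ≤ n := by positivity
        linarith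
    have h3 : ((n : ℝ) + 2) ^ n = (1 + 2 / (n : ℝ)) ^ n * (n : ℝ) ^ n := by
      rw [← mul_pow]; congr 1; field_simp
    calc ((n : ℝ) + 2) ^ (n + 1) = (((n : ℝ) + 2) * (1 + 2 / (n : ℝ)) ^ n) * (n : ℝ) ^ n := by
          rw [pow_succ, h3]; ring
      _ ≤ (((n : ℝ) + 2) * 7.4) * (n : ℝ) ^ n := by gcongr
      _ ≤ _ := by gcongr

theorem num2 (K l : ℕ) (hl : 1 ≤ l) (hK : l ≤ K) :
    (K : ℝ) ^ K * ((K : ℝ) + l + 2) ^ (K + l + 2) ≤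
      2 ^ (K + l + 2) * ((K : ℝ) + l) ^ (K + l) * ((K : ℝ) + 1) ^ (K + 1) := by
  have h1 := num1 (K + l) (by omega)
  push_cast at h1
  have hK0 : (0 : ℝ) < K := by have : 0 < K := by omega
                               exact_mod_cast this
  have h2 : 2 * (K : ℝ) ^ K ≤ ((K : ℝ) + 1) ^ K := by
    have := one_add_mul_le_pow (a := 1 / (K : ℝ)) (by have := one_div_pos.2 hK0; linarith) K
    have e : ((K : ℝ) + 1) ^ K = (1 + 1 / (K : ℝ)) ^ K * (K : ℝ) ^ K := by
      rw [← mul_pow]; congr 1; field_simp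
    rw [e]
    gcongr
    refine le_trans (le_of_eq ?_) this
    field_simp
    norm_num
  have hlK : (l : ℝ) ≤ K := by exact_mod_cast hK
  calc (K : ℝ) ^ K * ((K : ℝ) + l + 2) ^ (K + l + 2)
      = (K : ℝ) ^ K * ((K : ℝ) + l + 2) ^ (K + l + 1) * ((K : ℝ) + l + 2) := by ring
    _ ≤ (K : ℝ) ^ K * (2 ^ (K + l + 2) * ((K : ℝ) + l) ^ (K + l)) * (2 * (K + 1)) := by
        gcongr
        linarith
    _ = 2 ^ (K + l + 2) * ((K : ℝ) + l) ^ (K + l) * ((2 * (K : ℝ) ^ K) * (K + 1)) := by ring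
    _ ≤ 2 ^ (K + l + 2) * ((K : ℝ) + l) ^ (K + l) * (((K : ℝ) + 1) ^ K * (K + 1)) := by gcongr
    _ = _ := by ring

/-- The objective function, `k = K + 1`. -/
noncomputable def ff (K l : ℕ) (a d : ℝ) : ℝ :=
  a * (1 - a) ^ (K + 1 + l) * d ^ (K + 1) * (1 - d) ^ l
    + ((K : ℝ) / (K + l)) ^ K * ((l : ℝ) / (K + l)) ^ l * (1 - a) * a ^ (K + 1 + l) * (1 - d)

theorem realize_ff (K l : ℕ) (hl : 1 ≤ l) (hK : l ≤ K) (a d : ℝ) (ha : 0 ≤ a) (ha1 : a ≤ 1)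
    (hd : (l : ℝ) / (K + l) ≤ d) (hd1 : d ≤ 1) (y : ℝ) (hy : y < ff K l a d) :
    ∃ (n : ℕ) (A : Fin n → Fin n → Prop), Irreflexive A ∧
      (∀ u v, A u v → ¬ A v u) ∧ 1 ≤ n ∧ y ≤ starProb (K + 1) l (Fin n) A := by
  have hK0 : (0 : ℝ) < K := by have : 0 < K := by omega
                               exact_mod_cast this
  have hl0 : (0 : ℝ) < l := by exact_mod_cast hl
  set e : ℝ := (K : ℝ) / (K + l) with he
  set c : ℝ := (l : ℝ) / (K + l) with hc
  have hec : e + c = 1 := by rw [he, hc]; field_simp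
  have he0 : 0 < e := by rw [he]; positivity
  have hp1 : (1 - d) / e ≤ 1 := by rw [div_le_one he0]; linarith
  have hp0 : 0 ≤ (1 - d) / e := div_nonneg (by linarith) he0.le
  set p := (1 - d) / e with hp
  have hpe : p * e = 1 - d := by rw [hp]; field_simp
  refine realize (K + 1) l K l (by omega) a ((1 - a) * p) ha
    (mul_nonneg (by linarith) hp0) (by nlinarith) y (hy.trans_le (le_of_eq ?_))
  rw [← he, ← hc]
  have hc' : c = 1 - e := by linarith
  rw [show (1 - a) * p * c + (1 - a - (1 - a) * p) = (1 - a) * d by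
      rw [hc']; linear_combination (-(1 - a)) * hpe,
    show (1 - a) * p * e = (1 - a) * (1 - d) by linear_combination (1 - a) * hpe]
  unfold ff
  rw [← he, ← hc, ← hpe]
  simp only [mul_pow, pow_add, pow_one]
  ring

theorem ff_zero (K l : ℕ) (hl : 1 ≤ l) (hK : l ≤ K) (a : ℝ) (ha : 0 ≤ a) (ha1 : a ≤ 1 / 2) :
    ff K l a 0 ≤ ff K l (1 / (K + l + 2)) ((K + 1) / (K + 1 + l)) := by
  have hK0 : (0 : ℝ) < K := by have : 0 < K := by omega
                               exact_mod_cast this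
  have hl0 : (0 : ℝ) < l := by exact_mod_cast hl
  have h1 : (1 - a) * a ^ (K + 1 + l) ≤ 1 / 2 ^ (K + l + 2) := by
    calc (1 - a) * a ^ (K + 1 + l) = ((1 - a) * a) * a ^ (K + l) := by ring
      _ ≤ (1 / 4) * (1 / 2) ^ (K + l) := by
          have : (1 - a) * a ≤ 1 / 4 := by nlinarith [sq_nonneg (a - 1 / 2)]
          gcongr
      _ = _ := by rw [one_div_pow, pow_add 2 (K + l) 2]; field_simp; norm_num
  have h2 := num2 K l hl hK
  have e1 : ff K l a 0 = ((K : ℝ) / (K + l)) ^ K * ((l : ℝ) / (K + l)) ^ l *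
      ((1 - a) * a ^ (K + 1 + l)) := by
    unfold ff; simp; ring
  rw [e1]
  have e2 : ((K : ℝ) / (K + l)) ^ K * ((l : ℝ) / (K + l)) ^ l *
      (1 / 2 ^ (K + l + 2)) ≤ (K + 1) ^ (K + 1) * (l : ℝ) ^ l / (K + l + 2) ^ (K + l + 2) := by
    have : ((K : ℝ) / (K + l)) ^ K * ((l : ℝ) / (K + l)) ^ l * (1 / 2 ^ (K + l + 2)) =
      ((K : ℝ) ^ K * (l : ℝ) ^ l) / ((K + l) ^ (K + l) * 2 ^ (K + l + 2)) := by
      simp only [div_pow, pow_add]; field_simp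
    rw [this, div_le_div_iff₀ (by positivity) (by positivity)]
    have := mul_le_mul_of_nonneg_left h2 (show 0 ≤ (l : ℝ) ^ l by positivity)
    linarith
  have e3 : ff K l (1 / (K + l + 2)) ((K + 1) / (K + 1 + l)) ≥
      (K + 1) ^ (K + 1) * (l : ℝ) ^ l / (K + l + 2) ^ (K + l + 2) := by
    unfold ff
    have g1 : 1 - 1 / ((K : ℝ) + l + 2) = (K + 1 + l) / (K + l + 2) := by field_simp; ring
    have g2 : 1 - ((K : ℝ) + 1) / (K + 1 + l) = l / (K + 1 + l) := by field_simp; ring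
    rw [g1, g2]
    have g3 : 1 / ((K : ℝ) + l + 2) * ((K + 1 + l) / (K + l + 2)) ^ (K + 1 + l) *
      ((K + 1) / (K + 1 + l)) ^ (K + 1) * (l / (K + 1 + l)) ^ l =
      (K + 1) ^ (K + 1) * (l : ℝ) ^ l / (K + l + 2) ^ (K + l + 2) := by
      simp only [div_pow]
      rw [show K + l + 2 = 1 + (K + 1 + l) by ring, pow_add _ 1, pow_one,
        pow_add ((K : ℝ) + 1 + l) (K + 1) l]
      field_simp
    rw [g3]
    have : 0 ≤ ((K : ℝ) / (K + l)) ^ K * ((l : ℝ) / (K + l)) ^ l * ((K + 1 + l) / (K + l + 2)) *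
      (1 / (K + l + 2)) ^ (K + 1 + l) * (l / (K + 1 + l)) := by positivity
    linarith
  refine le_trans ?_ (e2.trans e3)
  gcongr

theorem ff_small (K l : ℕ) (hl : 1 ≤ l) (hK : l ≤ K) (a d : ℝ) (ha : 0 ≤ a) (ha1 : a ≤ 1 / 2)
    (hd : 0 ≤ d) (hd1 : d ≤ (l : ℝ) / (K + l)) (y : ℝ) (hy : y < ff K l a d) :
    y < ff K l a ((l : ℝ) / (K + l)) ∨ y < ff K l a 0 := by
  have hK0 : (0 : ℝ) < K := by have : 0 < K := by omega
                               exact_mod_cast this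
  have hl0 : (0 : ℝ) < l := by exact_mod_cast hl
  have hlK : (l : ℝ) ≤ K := by exact_mod_cast hK
  have hc0 : 0 < (l : ℝ) / (K + l) := by positivity
  have hc2 : (l : ℝ) / (K + l) ≤ 1 / 2 := by
    rw [div_le_div_iff₀ (by positivity) (by positivity)]; linarith
  by_contra! hcon
  obtain ⟨q1, q2⟩ := hcon
  unfold ff at hy q1 q2
  generalize ((K : ℝ) / (K + l)) ^ K * ((l : ℝ) / (K + l)) ^ l = L at *
  generalize (l : ℝ) / (K + l) = c at *
  obtain ⟨j, rfl⟩ := Nat.exists_eq_add_of_le hK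
  have key : d ^ (l + j) * (1 - d) ^ l ≤ c ^ (l + j) * (1 - c) ^ l := by
    have e : ∀ x : ℝ, x ^ (l + j) * (1 - x) ^ l = x ^ j * (x * (1 - x)) ^ l := by
      intro x; rw [mul_pow, pow_add]; ring
    rw [e, e]
    have h1 : d * (1 - d) ≤ c * (1 - c) := by nlinarith
    have h2 : 0 ≤ d * (1 - d) := mul_nonneg hd (by linarith)
    have h3 : 0 ≤ c := hc0.le
    gcongr
  set P := a * (1 - a) ^ (l + j + 1 + l) with hP
  have hP0 : 0 ≤ P := mul_nonneg ha (pow_nonneg (by linarith) _)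
  set R := L * (1 - a) * a ^ (l + j + 1 + l) with hR
  have k1 : P * d ^ (l + j + 1) * (1 - d) ^ l ≤ P * d * (c ^ (l + j) * (1 - c) ^ l) := by
    calc P * d ^ (l + j + 1) * (1 - d) ^ l = P * d * (d ^ (l + j) * (1 - d) ^ l) := by ring
      _ ≤ _ := by gcongr
  set H := c ^ (l + j) * (1 - c) ^ l with hH
  have k2 : P * c ^ (l + j + 1) * (1 - c) ^ l = P * c * H := by rw [hH]; ring
  rw [k2] at q1
  have k3 : R ≤ y := by simpa using q2
  have k4 : y < P * d * H + R * (1 - d) := by linarith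
  have k5 : (P * c * H + R * (1 - c)) * d ≤ y * d := by gcongr
  have k6 : R * (c - d) ≤ y * (c - d) := mul_le_mul_of_nonneg_right k3 (by linarith)
  have k7 : y * c < (P * d * H + R * (1 - d)) * c := by gcongr
  nlinarith

theorem stmt2 (k l : ℕ) (hl : 1 ≤ l) (hlk : l ≤ k) :
    ∀ ε : ℝ, 0 < ε → ∃ (n : ℕ) (A : Fin n → Fin n → Prop), Irreflexive A ∧
      (∀ u v, A u v → ¬ A v u) ∧ 1 ≤ n ∧ OPT k l - ε ≤ starProb k l (Fin n) A := by
  intro ε hε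
  unfold OPT
  split_ifs with hkl
  · subst hkl
    have hp : (0 : ℝ) < 2 ^ (2 * k) := by positivity
    set Z := {y : ℝ | ∃ a ∈ Set.Icc (0 : ℝ) 1,
      y = a * (1 - a) ^ (2 * k) + (1 - a) * a ^ (2 * k)} with hZ
    have hne : Z.Nonempty := ⟨_, 0, by simp, rfl⟩
    have hlt : sSup Z - ε * 2 ^ (2 * k) < sSup Z := by
      have : 0 < ε * 2 ^ (2 * k) := by positivity
      linarith
    obtain ⟨_, ⟨a, ha, rfl⟩, hlt⟩ := exists_lt_of_lt_csSup hne hlt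
    refine realize k k 1 1 (by norm_num) a (1 - a) ha.1 (by linarith [ha.2]) (by linarith) _ ?_
    have e : (1 / 2 ^ (2 * k)) * sSup Z - ε = (1 / 2 ^ (2 * k)) * (sSup Z - ε * 2 ^ (2 * k)) := by
      field_simp
    rw [e]
    refine (mul_lt_mul_of_pos_left hlt (by positivity : (0 : ℝ) < 1 / 2 ^ (2 * k))).trans_le
      (le_of_eq ?_)
    rw [show ((1 : ℕ) : ℝ) / (((1 : ℕ) : ℝ) + ((1 : ℕ) : ℝ)) = 1 / 2 by norm_num]
    rw [show 1 - a - (1 - a) = 0 by ring, add_zero, ← pow_add, ← pow_add, ← two_mul, mul_pow,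
      mul_pow, one_div_pow]
    ring
  · obtain ⟨K, rfl⟩ : ∃ K, k = K + 1 := ⟨k - 1, by omega⟩
    have hK : l ≤ K := by omega
    have hK0 : (0 : ℝ) < K := by have : 0 < K := by omega
                                 exact_mod_cast this
    have hl0 : (0 : ℝ) < l := by exact_mod_cast hl
    have hlK : (l : ℝ) ≤ K := by exact_mod_cast hK
    set Z := {y : ℝ | ∃ a ∈ Set.Icc (0 : ℝ) (1 / 2),
      ∃ d ∈ Set.Icc (0 : ℝ) (((K + 1 : ℕ) : ℝ) / (((K + 1 : ℕ) : ℝ) + (l : ℝ))),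
      y = a * (1 - a) ^ (K + 1 + l) * d ^ (K + 1) * (1 - d) ^ l
        + ((((K + 1 : ℕ) : ℝ) - 1) ^ (K + 1 - 1) * (l : ℝ) ^ l /
            (((K + 1 : ℕ) : ℝ) + (l : ℝ) - 1) ^ (K + 1 + l - 1))
          * (1 - a) * a ^ (K + 1 + l) * (1 - d)} with hZ
    have hne : Z.Nonempty := ⟨_, 0, by simp, 0, ⟨le_rfl, by positivity⟩, rfl⟩
    have hlt : sSup Z - ε < sSup Z := by linarith
    obtain ⟨_, ⟨a, ha, d, hd, rfl⟩, hlt⟩ := exists_lt_of_lt_csSup hne hlt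
    have hL : ((((K + 1 : ℕ) : ℝ) - 1) ^ (K + 1 - 1) * (l : ℝ) ^ l /
            (((K + 1 : ℕ) : ℝ) + (l : ℝ) - 1) ^ (K + 1 + l - 1)) =
        ((K : ℝ) / (K + l)) ^ K * ((l : ℝ) / (K + l)) ^ l := by
      rw [show K + 1 - 1 = K by omega, show K + 1 + l - 1 = K + l by omega]
      push_cast
      rw [show (K : ℝ) + 1 - 1 = K by ring, show (K : ℝ) + 1 + l - 1 = K + l by ring,
        div_pow, div_pow, pow_add, div_mul_div_comm]
    rw [hL] at hlt
    have hlt' : sSup Z - ε < ff K l a d := hlt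
    have hd2 : d ≤ ((K : ℝ) + 1) / (K + 1 + l) := by simpa using hd.2
    have hle1 : ((K : ℝ) + 1) / (K + 1 + l) ≤ 1 := by
      rw [div_le_one (by positivity)]; linarith
    have hcd : (l : ℝ) / (K + l) ≤ ((K : ℝ) + 1) / (K + 1 + l) := by
      rw [div_le_div_iff₀ (by positivity) (by positivity)]; nlinarith
    have ha1 : a ≤ 1 := by linarith [ha.2]
    rcases le_total ((l : ℝ) / (K + l)) d with h | h
    · exact realize_ff K l hl hK a d ha.1 ha1 h (by linarith) _ hlt'
    · rcases ff_small K l hl hK a d ha.1 ha.2 hd.1 h _ hlt' with h1 | h1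
      · exact realize_ff K l hl hK a _ ha.1 ha1 le_rfl (by linarith) _ h1
      · refine realize_ff K l hl hK (1 / (K + l + 2)) ((K + 1) / (K + 1 + l)) (by positivity) ?_
          hcd hle1 _ (h1.trans_le (ff_zero K l hl hK a ha.1 ha.2))
        rw [div_le_one (by positivity)]; linarith
end

section
/- Let k ≥ l ≥ 1 be integers with k + l ≥ 6 and m = k + l. Then the function f is non-decreasing on [0,1], concave on [0,1], and satisfies f(x) ≥ x^k (1−x)^l for all x ∈ [0,1]. -/
open scoped BigOperators

/-- The piecewise function `f` from the paper. -/
noncomputable def fFun (k l : ℕ) (x : ℝ) : ℝ :=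
  if x ≤ ((k : ℝ) - 1) / ((k : ℝ) + l - 1) then
    (((k : ℝ) - 1) ^ (k - 1) * (l : ℝ) ^ l / ((k : ℝ) + l - 1) ^ (k + l - 1)) * x
  else if x ≤ (k : ℝ) / ((k : ℝ) + l) then
    x ^ k * (1 - x) ^ l
  else
    (k : ℝ) ^ k * (l : ℝ) ^ l / ((k : ℝ) + l) ^ (k + l)

lemma glue_deriv {u v u' v' : ℝ → ℝ} {a : ℝ} (hu : ∀ x, HasDerivAt u (u' x) x)
    (hv : ∀ x, HasDerivAt v (v' x) x) (h0 : u a = v a) (h1 : u' a = v' a) (x : ℝ) :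
    HasDerivAt (fun x => if x ≤ a then u x else v x) (if x ≤ a then u' x else v' x) x := by
  rcases lt_trichotomy x a with h | h | h
  · rw [if_pos h.le]
    refine (hu x).congr_of_eventuallyEq ?_
    filter_upwards [Iio_mem_nhds h] with y hy
    exact if_pos (le_of_lt hy)
  · subst h
    rw [if_pos le_rfl]
    have A : HasDerivWithinAt (fun y => if y ≤ x then u y else v y) (u' x) (Set.Iic x) x :=
      (hu x).hasDerivWithinAt.congr (fun y hy => if_pos hy) (if_pos le_rfl)
    have B : HasDerivWithinAt (fun y => if y ≤ x then u y else v y) (u' x) (Set.Ici x) x := by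
      rw [h1]
      refine (hv x).hasDerivWithinAt.congr (fun y hy => ?_) ?_
      · rcases eq_or_lt_of_le (show x ≤ y from hy) with e | e
        · subst e; simp [h0]
        · exact if_neg (not_le.2 e)
      · simp [h0]
    have C := A.union B
    rw [Set.Iic_union_Ici] at C
    exact C.hasDerivAt Filter.univ_mem
  · rw [if_neg (not_le.2 h)]
    refine (hv x).congr_of_eventuallyEq ?_
    filter_upwards [Ioi_mem_nhds h] with y hy
    exact if_neg (not_le.2 hy)

lemma max_bound (a b : ℕ) (ha : 0 < a) (hb : 0 < b) (x : ℝ) (h0 : 0 ≤ x) (h1 : x ≤ 1) :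
    x ^ a * (1 - x) ^ b ≤ (a : ℝ) ^ a * (b : ℝ) ^ b / ((a : ℝ) + b) ^ (a + b) := by
  have ha' : (0 : ℝ) < a := by exact_mod_cast ha
  have hb' : (0 : ℝ) < b := by exact_mod_cast hb
  set s : ℝ := (a : ℝ) + b with hs
  have hs0 : 0 < s := by positivity
  have e1 : x * s / a ≤ Real.exp (x * s / a - 1) := by
    have := Real.add_one_le_exp (x * s / a - 1); linarith
  have e2 : (1 - x) * s / b ≤ Real.exp ((1 - x) * s / b - 1) := by
    have := Real.add_one_le_exp ((1 - x) * s / b - 1); linarith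
  have hx : 0 ≤ 1 - x := by linarith
  have e3 : (x * s / a) ^ a * ((1 - x) * s / b) ^ b ≤ 1 := by
    calc _ ≤ (Real.exp (x * s / a - 1)) ^ a * (Real.exp ((1 - x) * s / b - 1)) ^ b := by
          gcongr
      _ = 1 := by
          rw [← Real.exp_nat_mul, ← Real.exp_nat_mul, ← Real.exp_add, Real.exp_eq_one_iff]
          field_simp
          rw [hs]; ring
  rw [le_div_iff₀ (by positivity)]
  have e4 : (x * s / a) ^ a * ((1 - x) * s / b) ^ b
      = x ^ a * (1 - x) ^ b * s ^ (a + b) / ((a : ℝ) ^ a * (b : ℝ) ^ b) := by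
    rw [div_pow, div_pow, mul_pow, mul_pow, pow_add]; field_simp
  rw [e4, div_le_one (by positivity)] at e3
  exact e3

theorem stmt6 (k l : ℕ) (hl : 1 ≤ l) (hlk : l ≤ k) (hm : 6 ≤ k + l) :
    MonotoneOn (fFun k l) (Set.Icc 0 1) ∧ ConcaveOn ℝ (Set.Icc 0 1) (fFun k l) ∧
    ∀ x ∈ Set.Icc (0 : ℝ) 1, x ^ k * (1 - x) ^ l ≤ fFun k l x := by
  obtain ⟨r, rfl⟩ : ∃ r, k = r + 2 := ⟨k - 2, by omega⟩
  obtain ⟨j, rfl⟩ : ∃ j, l = j + 1 := ⟨l - 1, by omega⟩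
  clear hlk hm hl
  obtain ⟨n, hn⟩ : ∃ n : ℝ, n = ((r + 1 : ℕ) : ℝ) := ⟨_, rfl⟩
  obtain ⟨L, hL⟩ : ∃ L : ℝ, L = ((j + 1 : ℕ) : ℝ) := ⟨_, rfl⟩
  have hn0 : 0 < n := by rw [hn]; positivity
  have hL0 : 0 < L := by rw [hL]; positivity
  obtain ⟨p, hp⟩ : ∃ p : ℝ, p = n / (n + L) := ⟨_, rfl⟩
  obtain ⟨q, hq⟩ : ∃ q : ℝ, q = (n + 1) / (n + 1 + L) := ⟨_, rfl⟩
  obtain ⟨c, hc⟩ : ∃ c : ℝ, c = n ^ (r + 1) * L ^ (j + 1) / (n + L) ^ (r + 1 + (j + 1)) :=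
    ⟨_, rfl⟩
  obtain ⟨d, hd⟩ : ∃ d : ℝ, d = (n + 1) ^ (r + 2) * L ^ (j + 1) /
    (n + 1 + L) ^ (r + 2 + (j + 1)) := ⟨_, rfl⟩
  have hf : fFun (r + 2) (j + 1) = fun x => if x ≤ p then c * x else
      (if x ≤ q then x ^ (r + 2) * (1 - x) ^ (j + 1) else d) := by
    funext x
    have a1 : ((r + 2 : ℕ) : ℝ) = n + 1 := by rw [hn]; push_cast; ring
    have a2 : n + 1 - 1 = n := by ring
    have a3 : n + 1 + L - 1 = n + L := by ring
    have a4 : r + 2 + (j + 1) - 1 = r + 1 + (j + 1) := by omega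
    have a5 : r + 2 - 1 = r + 1 := by omega
    rw [fFun, a1, ← hL, a2, a3, a4, a5, ← hp, ← hq, ← hc, ← hd]
  have hp0 : 0 < p := by rw [hp]; positivity
  have hpq : p ≤ q := by
    rw [hp, hq, div_le_div_iff₀ (by positivity) (by positivity)]; nlinarith
  have hq1 : q < 1 := by rw [hq, div_lt_one (by positivity)]; linarith
  have hp' : 1 - p = L / (n + L) := by rw [hp]; field_simp; ring
  have hq' : 1 - q = L / (n + 1 + L) := by rw [hq]; field_simp; ring
  have hcp : c = p ^ (r + 1) * (1 - p) ^ (j + 1) := by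
    rw [hp', hp, hc, div_pow, div_pow, pow_add (n + L)]; field_simp
  have hdq : d = q ^ (r + 2) * (1 - q) ^ (j + 1) := by
    rw [hq', hq, hd, div_pow, div_pow, pow_add (n + 1 + L)]; field_simp
  have hc0 : 0 < c := by rw [hc]; positivity
  obtain ⟨G, hG⟩ : ∃ G : ℝ → ℝ, G = fun x =>
      (x ^ (r + 1) * (n + 1 - (n + 1 + L) * x)) * (1 - x) ^ j := ⟨_, rfl⟩
  have hGd : ∀ x, HasDerivAt (fun x : ℝ => x ^ (r + 2) * (1 - x) ^ (j + 1)) (G x) x := by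
    intro x
    have h1 := hasDerivAt_pow (r + 2) x
    have h2 := ((hasDerivAt_id x).const_sub 1).pow (j + 1)
    refine (h1.mul h2).congr_deriv ?_
    rw [hG, hn, hL]
    simp
    ring
  have hGq : G q = 0 := by
    have : n + 1 - (n + 1 + L) * q = 0 := by rw [hq]; field_simp; ring
    simp [hG, this]
  have hGp : G p = c := by
    have : n + 1 - (n + 1 + L) * p = 1 - p := by rw [hp]; field_simp; ring
    simp only [hG, this, hcp]; ring
  have hder : ∀ x, HasDerivAt (fFun (r + 2) (j + 1))
      (if x ≤ p then c else if x ≤ q then G x else 0) x := by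
    rw [hf]
    refine glue_deriv (u' := fun _ => c) (v' := fun x => if x ≤ q then G x else 0) ?_ ?_ ?_ ?_
    · intro x; simpa using (hasDerivAt_id x).const_mul c
    · exact glue_deriv (v' := fun _ => 0) hGd (fun x => hasDerivAt_const x d) hdq.symm hGq
    · simp only [if_pos hpq, hcp]; ring
    · simp only [if_pos hpq, hGp]
  have hH : AntitoneOn (fun x : ℝ => x ^ (r + 1) * (n + 1 - (n + 1 + L) * x)) (Set.Icc p q) := by
    have hHd : ∀ x : ℝ, HasDerivAt (fun x : ℝ => x ^ (r + 1) * (n + 1 - (n + 1 + L) * x))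
        (x ^ r * (n + 1) * (n - (n + 1 + L) * x)) x := by
      intro x
      have h1 := hasDerivAt_pow (r + 1) x
      have h2 := ((hasDerivAt_id x).const_mul (n + 1 + L)).const_sub (n + 1)
      refine (h1.mul h2).congr_deriv ?_
      rw [hn]
      simp
      ring
    refine antitoneOn_of_deriv_nonpos (convex_Icc p q)
      (fun x _ => (hHd x).continuousAt.continuousWithinAt)
      (fun x _ => (hHd x).differentiableAt.differentiableWithinAt) ?_
    intro x hx
    have hx' := interior_subset hx
    have hx0 : 0 < x := lt_of_lt_of_le hp0 hx'.1
    rw [(hHd x).deriv]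
    refine mul_nonpos_of_nonneg_of_nonpos (by positivity) ?_
    have : n = (n + L) * p := by rw [hp]; field_simp
    nlinarith [hx'.1]
  have hGa : AntitoneOn G (Set.Icc p q) := by
    intro x hx y hy hxy
    have hy0 : 0 < y := lt_of_lt_of_le hp0 hy.1
    have hx0 : 0 < x := lt_of_lt_of_le hp0 hx.1
    have hy1 : 0 ≤ 1 - y := by linarith [hy.2]
    have hqq : n + 1 = (n + 1 + L) * q := by rw [hq]; field_simp
    have hxx : 0 ≤ n + 1 - (n + 1 + L) * x := by nlinarith [hx.2]
    simp only [hG]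
    exact mul_le_mul (hH hx hy hxy) (pow_le_pow_left₀ hy1 (by linarith) j)
      (by positivity) (by positivity)
  have hDa : Antitone (fun x => if x ≤ p then c else if x ≤ q then G x else 0) := by
    intro x y hxy
    have key : ∀ z, p ≤ z → z ≤ q → 0 ≤ G z ∧ G z ≤ c := fun z h1 h2 =>
      ⟨hGq ▸ hGa ⟨h1, h2⟩ ⟨hpq, le_rfl⟩ h2, hGp ▸ hGa ⟨le_rfl, hpq⟩ ⟨h1, h2⟩ h1⟩
    dsimp only
    split_ifs with h1 h2 h3 h4 h5 h6 h7
    all_goals first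
      | exact le_rfl
      | exact hc0.le
      | (exfalso; linarith)
      | exact (key _ (by linarith) (by linarith)).1
      | exact (key _ (by linarith) (by linarith)).2
      | exact hGa ⟨by linarith, by linarith⟩ ⟨by linarith, by linarith⟩ hxy
  have hD0 : ∀ x, 0 ≤ (if x ≤ p then c else if x ≤ q then G x else 0) := by
    intro x
    have h := hDa (le_max_left x (q + 1))
    have h1 : ¬ max x (q + 1) ≤ p := by
      have := le_max_right x (q + 1); intro h; linarith
    have h2 : ¬ max x (q + 1) ≤ q := by
      have := le_max_right x (q + 1); intro h; linarith
    simpa only [if_neg h1, if_neg h2] using h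
  have hderiv : deriv (fFun (r + 2) (j + 1)) =
      fun x => if x ≤ p then c else if x ≤ q then G x else 0 := funext fun x => (hder x).deriv
  have hdiff : Differentiable ℝ (fFun (r + 2) (j + 1)) := fun x => (hder x).differentiableAt
  refine ⟨?_, ?_, ?_⟩
  · exact (monotone_of_deriv_nonneg hdiff (fun x => by rw [hderiv]; exact hD0 x)).monotoneOn _
  · refine AntitoneOn.concaveOn_of_deriv (convex_Icc 0 1) hdiff.continuous.continuousOn
      hdiff.differentiableOn ?_
    rw [hderiv]
    exact hDa.antitoneOn _
  · intro x hx
    rw [hf]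
    dsimp only
    split_ifs with h1 h2
    · have := max_bound (r + 1) (j + 1) (by omega) (by omega) x hx.1 hx.2
      rw [← hn, ← hL, ← hc] at this
      calc x ^ (r + 2) * (1 - x) ^ (j + 1) = (x ^ (r + 1) * (1 - x) ^ (j + 1)) * x := by ring
        _ ≤ c * x := mul_le_mul_of_nonneg_right this hx.1
    · exact le_rfl
    · have := max_bound (r + 2) (j + 1) (by omega) (by omega) x hx.1 hx.2
      have a1 : ((r + 2 : ℕ) : ℝ) = n + 1 := by rw [hn]; push_cast; ring
      rw [a1, ← hL, ← hd] at this
      exact this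
end

section
/- Let k ≥ l ≥ 1 be integers with k + l ≥ 6, m = k + l, and let α be a real with 0 ≤ α ≤ 1/2. Then the function f_*(d) = α(1−α)^m f(d) + ((k−1)^{k−1} l^l/(m−1)^{m−1})(1−α)α^m(1−d) attains its maximum over [0,1] at some point of the interval [(k−1)/(m−1), k/m]; that is, there exists d ∈ [(k−1)/(m−1), k/m] with f_*(d) ≥ f_*(d′) for all d′ ∈ [0,1]. -/
open scoped BigOperators

theorem stmt7 (k l : ℕ) (hl : 1 ≤ l) (hlk : l ≤ k) (hm : 6 ≤ k + l)
    (α : ℝ) (hα0 : 0 ≤ α) (hα : α ≤ 1 / 2) :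
    ∃ d ∈ Set.Icc (((k : ℝ) - 1) / ((k : ℝ) + l - 1)) ((k : ℝ) / ((k : ℝ) + l)),
      ∀ d' ∈ Set.Icc (0 : ℝ) 1,
        α * (1 - α) ^ (k + l) * fFun k l d'
            + (((k : ℝ) - 1) ^ (k - 1) * (l : ℝ) ^ l / ((k : ℝ) + l - 1) ^ (k + l - 1))
              * (1 - α) * α ^ (k + l) * (1 - d')
          ≤ α * (1 - α) ^ (k + l) * fFun k l d
            + (((k : ℝ) - 1) ^ (k - 1) * (l : ℝ) ^ l / ((k : ℝ) + l - 1) ^ (k + l - 1))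
              * (1 - α) * α ^ (k + l) * (1 - d) := by
  
  have hk3 : 3 ≤ k := by omega
  obtain ⟨p, rfl⟩ : ∃ p, k = p + 1 := ⟨k - 1, by omega⟩
  have hp : (2 : ℝ) ≤ (p : ℝ) := by
    have : 2 ≤ p := by omega
    exact_mod_cast this
  have hL : (1 : ℝ) ≤ (l : ℝ) := by exact_mod_cast hl
  have e1 : ((p + 1 : ℕ) : ℝ) - 1 = (p : ℝ) := by push_cast; ring
  have e2 : ((p + 1 : ℕ) : ℝ) + (l : ℝ) - 1 = (p : ℝ) + l := by push_cast; ring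
  have e3 : p + 1 + l - 1 = p + l := by omega
  have e4 : p + 1 - 1 = p := by omega
  simp only [fFun, e1, e2, e3, e4]
  have e5 : ((p + 1 : ℕ) : ℝ) = (p : ℝ) + 1 := by push_cast; ring
  simp only [e5]
  set c : ℝ := (p : ℝ) ^ p * (l : ℝ) ^ l / ((p : ℝ) + l) ^ (p + l) with hc
  have hc0 : 0 ≤ c := by positivity
  have hab : (p : ℝ) / ((p : ℝ) + l) ≤ ((p : ℝ) + 1) / ((p : ℝ) + 1 + l) := by
    rw [div_le_div_iff₀ (by positivity) (by positivity)]
    nlinarith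
  have hfa : ((p : ℝ) / ((p : ℝ) + l)) ^ (p + 1) * (1 - (p : ℝ) / ((p : ℝ) + l)) ^ l
      = c * ((p : ℝ) / ((p : ℝ) + l)) := by
    have h1 : 1 - (p : ℝ) / ((p : ℝ) + l) = l / ((p : ℝ) + l) := by
      field_simp
      ring
    rw [h1, hc, div_pow, div_pow, pow_add ((p : ℝ) + l) p l, pow_succ, pow_succ]
    field_simp
  have hfb : (((p : ℝ) + 1) / ((p : ℝ) + 1 + l)) ^ (p + 1)
        * (1 - ((p : ℝ) + 1) / ((p : ℝ) + 1 + l)) ^ l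
      = ((p : ℝ) + 1) ^ (p + 1) * (l : ℝ) ^ l / ((p : ℝ) + 1 + l) ^ (p + 1 + l) := by
    have h1 : 1 - ((p : ℝ) + 1) / ((p : ℝ) + 1 + l) = l / ((p : ℝ) + 1 + l) := by
      field_simp
      ring
    rw [h1, div_pow, div_pow, pow_add ((p : ℝ) + 1 + l) (p + 1) l]
    field_simp
  have hpow : (1 - α) * α ^ (p + 1 + l) ≤ α * (1 - α) ^ (p + 1 + l) := by
    have e : p + 1 + l = (p + l) + 1 := by omega
    have h := pow_le_pow_left₀ hα0 (by linarith : α ≤ 1 - α) (p + l)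
    have h0 : 0 ≤ α * (1 - α) := mul_nonneg hα0 (by linarith)
    rw [e, pow_succ, pow_succ]
    nlinarith [mul_le_mul_of_nonneg_left h h0]
  have hB0 : 0 ≤ c * (1 - α) * α ^ (p + 1 + l) :=
    mul_nonneg (mul_nonneg hc0 (by linarith)) (pow_nonneg hα0 _)
  have hcB : c * (1 - α) * α ^ (p + 1 + l) ≤ α * (1 - α) ^ (p + 1 + l) * c := by
    nlinarith [mul_le_mul_of_nonneg_left hpow hc0]
  set lam : ℝ := ((p : ℝ) + 1) ^ (p + 1) * (l : ℝ) ^ l / ((p : ℝ) + 1 + l) ^ (p + 1 + l)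
  set a : ℝ := (p : ℝ) / ((p : ℝ) + l)
  set b : ℝ := ((p : ℝ) + 1) / ((p : ℝ) + 1 + l)
  generalize c * (1 - α) * α ^ (p + 1 + l) = B at *
  generalize α * (1 - α) ^ (p + 1 + l) = A at *
  obtain ⟨d, hd, hmax⟩ := (isCompact_Icc (a := a) (b := b)).exists_isMaxOn
    (Set.nonempty_Icc.2 hab)
    (f := fun x : ℝ => A * (x ^ (p + 1) * (1 - x) ^ l) + B * (1 - x))
    (by fun_prop)
  have hmax' : ∀ x ∈ Set.Icc a b, A * (x ^ (p + 1) * (1 - x) ^ l) + B * (1 - x)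
      ≤ A * (d ^ (p + 1) * (1 - d) ^ l) + B * (1 - d) := fun x hx => hmax hx
  refine ⟨d, hd, ?_⟩
  have hval : (if d ≤ a then c * d else if d ≤ b then d ^ (p + 1) * (1 - d) ^ l else lam)
      = d ^ (p + 1) * (1 - d) ^ l := by
    split_ifs with h1 h2
    · rw [le_antisymm h1 hd.1, hfa]
    · rfl
    · exact absurd hd.2 h2
  rw [hval]
  intro x hx
  split_ifs with h1 h2
  · have h := hmax' a ⟨le_rfl, hab⟩
    rw [hfa] at h
    nlinarith [mul_nonneg (sub_nonneg.2 hcB) (sub_nonneg.2 h1)]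
  · exact hmax' x ⟨(not_le.1 h1).le, h2⟩
  · have h := hmax' b ⟨hab, le_rfl⟩
    rw [hfb] at h
    nlinarith [mul_nonneg hB0 (sub_nonneg.2 (not_le.1 h2).le)]
end

section
/- Let x ∈ X and y ∈ Y be non-adjacent (neither xy nor yx is an arc of G). Then n² · Pr[φ ∈ 𝒮 and both x and y lie in the image of φ] ≤ (m(m−1)/C(m,k)) · (α+β)(1−D)^{m−2}. -/
open scoped BigOperators

open scoped Classical in
theorem star_count (k l : ℕ) (hm : 6 ≤ k + l)
    (V : Type) [Fintype V] (A : V → V → Prop)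
    (hopp : ∀ u v, A u v → ¬ A v u)
    (x y : V) (hne : x ≠ y) (hxy : ¬ A x y) (hyx : ¬ A y x) (hxx : ¬ A x x) :
    (Nat.choose (k + l) k) *
      (Finset.univ.filter (fun φ : Fin (k + l + 1) → V =>
        IsStarEmb k l A φ ∧ x ∈ Set.range φ ∧ y ∈ Set.range φ)).card
      ≤ (Finset.univ.filter (fun u => A y u ∨ A u y)).card *
        (((k + l) * (k + l) - (k + l)) *
          (Finset.univ.filter (fun u => ¬ (A x u ∨ A u x))).card ^ (k + l - 2)) := by
  set W := Finset.univ.filter (fun u => ¬ (A x u ∨ A u x)) with hW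
  set N := Finset.univ.filter (fun u => A y u ∨ A u y) with hN
  set P : Fin (k + l) × Fin (k + l) → Finset (Fin (k + l) → V) := fun p =>
    Fintype.piFinset (fun t => if t = p.1 then {x} else if t = p.2 then {y} else W) with hP
  have hPcard : ∀ p ∈ (Finset.univ : Finset (Fin (k + l))).offDiag,
      (P p).card ≤ W.card ^ (k + l - 2) := by
    rintro ⟨i, j⟩ hp
    have hij : i ≠ j := by simpa using hp
    simp only [hP, Fintype.card_piFinset]
    rw [← Finset.mul_prod_erase Finset.univ _ (Finset.mem_univ i),
      ← Finset.mul_prod_erase (Finset.univ.erase i) _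
        (Finset.mem_erase.2 ⟨hij.symm, Finset.mem_univ j⟩)]
    rw [Finset.prod_congr rfl (g := fun _ => W.card)]
    · simp [hij.symm, Finset.card_erase_of_mem, hij, Nat.sub_sub]
    · intro t ht
      simp only [Finset.mem_erase] at ht
      simp [ht.1, ht.2.1]
  have hB : ((Finset.univ : Finset (Fin (k + l))).offDiag.biUnion P).card
      ≤ ((k + l) * (k + l) - (k + l)) * W.card ^ (k + l - 2) := by
    have := Finset.card_biUnion_le_card_mul _ P _ hPcard
    simpa [Finset.offDiag_card] using this
  have hE : ∀ T : Finset (Fin (k + l)), ∃ e : Equiv.Perm (Fin (k + l)),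
      T ∈ Finset.powersetCard k Finset.univ → ∀ i, i ∈ T ↔ (e i).val < k := by
    intro T
    by_cases hT : T ∈ Finset.powersetCard k Finset.univ
    · have hc : T.card = k := (Finset.mem_powersetCard.1 hT).2
      have h1 : Fintype.card {i : Fin (k + l) // i ∈ T}
          = Fintype.card {i : Fin (k + l) // i.val < k} := by
        rw [Fintype.card_coe, hc, Fintype.card_subtype, Fin.card_filter_val_lt]
        omega
      let e := Fintype.equivOfCardEq h1
      refine ⟨e.extendSubtype, fun _ i => ⟨fun hi => e.extendSubtype_mem i hi, fun h => ?_⟩⟩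
      by_contra hi
      exact e.extendSubtype_not_mem i hi h
    · exact ⟨1, fun h => absurd h hT⟩
  choose e he using hE
  have key := Finset.card_le_card_of_injOn
    (s := (Finset.powersetCard k (Finset.univ : Finset (Fin (k + l)))) ×ˢ
      (Finset.univ.filter (fun φ : Fin (k + l + 1) → V =>
        IsStarEmb k l A φ ∧ x ∈ Set.range φ ∧ y ∈ Set.range φ)))
    (t := N ×ˢ ((Finset.univ : Finset (Fin (k + l))).offDiag.biUnion P))
    (fun q => (q.2 0, fun i => q.2 (e q.1 i).succ)) ?_ ?_
  · rw [Finset.card_product, Finset.card_product, Finset.card_powersetCard] at key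
    simp only [Finset.card_univ, Fintype.card_fin] at key
    exact key.trans (Nat.mul_le_mul_left _ hB)
  · rintro ⟨T, φ⟩ hq
    simp only [Finset.coe_product, Set.mem_prod, Finset.mem_coe, Finset.mem_filter,
      Finset.mem_univ, true_and] at hq
    obtain ⟨hT, ⟨hinj, harc⟩, ⟨a, ha⟩, ⟨b, hb⟩⟩ := hq
    have hadj : ∀ i : Fin (k + l), A (φ 0) (φ i.succ) ∨ A (φ i.succ) (φ 0) := by
      intro i
      rcases Nat.lt_or_ge i.val k with h | h
      · left; rw [← harc]; left; simp; omega
      · right; rw [← harc]; right; simp; omega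
    have hnadj : ∀ i j : Fin (k + l), ¬ A (φ i.succ) (φ j.succ) := by
      intro i j
      rw [← harc]
      simp [StarArc]
    have ha0 : a ≠ 0 := by
      rintro rfl
      have hb0 : b ≠ 0 := by
        rintro rfl
        exact hne (ha.symm.trans hb)
      obtain ⟨j, rfl⟩ := Fin.exists_succ_eq.2 hb0
      have := hadj j
      rw [ha, hb] at this
      tauto
    have hb0 : b ≠ 0 := by
      rintro rfl
      obtain ⟨j, rfl⟩ := Fin.exists_succ_eq.2 ha0
      have := hadj j
      rw [ha, hb] at this
      tauto
    obtain ⟨i, rfl⟩ := Fin.exists_succ_eq.2 ha0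
    obtain ⟨j, rfl⟩ := Fin.exists_succ_eq.2 hb0
    simp only [Finset.coe_product, Set.mem_prod, Finset.mem_coe]
    constructor
    · simp only [hN, Finset.mem_filter, Finset.mem_univ, true_and]
      rw [← hb]
      exact (hadj j).symm
    · rw [Finset.mem_biUnion]
      refine ⟨((e T).symm i, (e T).symm j), ?_, ?_⟩
      · simp only [Finset.mem_offDiag, Finset.mem_univ, true_and]
        intro h
        have := (e T).symm.injective h
        subst this
        exact hne (ha.symm.trans hb)
      · simp only [hP, Fintype.mem_piFinset]
        intro t
        split_ifs with h1 h2
        · subst h1; simp [ha]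
        · subst h2; simp [hb]
        · simp only [hW, Finset.mem_filter, Finset.mem_univ, true_and]
          rw [← ha]
          rintro (h | h)
          · exact hnadj _ _ h
          · exact hnadj _ _ h
  · rintro ⟨T, φ⟩ hq ⟨T', φ'⟩ hq' heq
    simp only [Finset.coe_product, Set.mem_prod, Finset.mem_coe, Finset.mem_filter,
      Finset.mem_univ, true_and] at hq hq'
    obtain ⟨hT, ⟨-, harc⟩, -⟩ := hq
    obtain ⟨hT', ⟨-, harc'⟩, -⟩ := hq'
    simp only [Prod.mk.injEq] at heq
    obtain ⟨h0, h1⟩ := heq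
    have hmem : ∀ i, i ∈ T ↔ A (φ 0) (φ (e T i).succ) := by
      intro i
      rw [he T hT i, ← harc]
      simp [StarArc]
    have hmem' : ∀ i, i ∈ T' ↔ A (φ' 0) (φ' (e T' i).succ) := by
      intro i
      rw [he T' hT' i, ← harc']
      simp [StarArc]
    have hTT : T = T' := by
      ext i
      rw [hmem, hmem', h0, congrFun h1 i]
    subst hTT
    simp only [Prod.mk.injEq, true_and]
    funext z
    refine Fin.cases h0 (fun i => ?_) z
    have := congrFun h1 ((e T).symm i)
    simpa using this

theorem stmt16 (k l : ℕ) (hl : 1 ≤ l) (hlk : l ≤ k) (hm : 6 ≤ k + l)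
    (V : Type) [Fintype V] (A : V → V → Prop)
    (hirr : Irreflexive A) (hopp : ∀ u v, A u v → ¬ A v u) (hn : 1 ≤ Fintype.card V)
    (x y : V) (hx : x ∈ bigX A) (hy : y ∈ bigY A) (hxy : ¬ A x y) (hyx : ¬ A y x) :
    (Fintype.card V : ℝ) ^ 2 *
        starProbOn k l A (fun φ => x ∈ Set.range φ ∧ y ∈ Set.range φ)
      ≤ (((k : ℝ) + l) * ((k : ℝ) + l - 1) / (Nat.choose (k + l) k : ℝ))
          * (alphaX A + betaY A) * (1 - Dmin A) ^ (k + l - 2) := by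
  classical
  have hne : x ≠ y := by
    rintro rfl
    exact hy hx
  have hcount := star_count k l hm V A hopp x y hne hxy hyx (hirr x)
  have hn0 : (0 : ℝ) < Fintype.card V := by exact_mod_cast hn
  set n : ℝ := (Fintype.card V : ℝ) with hndef
  -- the neighbourhood of `y`
  have hN : ((Finset.univ.filter (fun u => A y u ∨ A u y)).card : ℝ) / n
      ≤ alphaX A + betaY A := by
    have hb : rhoIn A (bigY A) y ≤ betaY A :=
      le_csSup (Set.toFinite _).bddAbove ⟨y, hy, rfl⟩
    refine le_trans ?_ (add_le_add le_rfl hb)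
    unfold alphaX muSet rhoIn
    rw [← add_div]
    apply div_le_div_of_nonneg_right _ hn0.le
    rw [Nat.card_eq_fintype_card, Nat.card_eq_fintype_card, Fintype.card_subtype]
    rw [Fintype.card_subtype]
    norm_cast
    refine le_trans (Finset.card_le_card ?_) (Finset.card_union_le _ _)
    intro u hu
    simp only [Finset.mem_filter, Finset.mem_univ, true_and, Finset.mem_union] at hu ⊢
    by_cases h : u ∈ bigX A
    · exact Or.inl h
    · exact Or.inr ⟨hu, h⟩
  -- the non-neighbourhood of `x`
  have hW : ((Finset.univ.filter (fun u => ¬ (A x u ∨ A u x))).card : ℝ) / n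
      ≤ 1 - Dmin A := by
    have hD : Dmin A ≤ rho A x := csInf_le (Set.toFinite _).bddBelow ⟨x, hx, rfl⟩
    have h1 : ((Finset.univ.filter (fun u => ¬ (A x u ∨ A u x))).card : ℝ) / n
        = 1 - rho A x := by
      unfold rho
      rw [Nat.card_eq_fintype_card, Fintype.card_subtype]
      have h2 := Finset.card_filter_add_card_filter_not (s := (Finset.univ : Finset V))
        (fun u => A x u ∨ A u x)
      rw [Finset.card_univ] at h2
      have h3 : ((Finset.univ.filter (fun u => A x u ∨ A u x)).card : ℝ)
        + ((Finset.univ.filter (fun u => ¬ (A x u ∨ A u x))).card : ℝ) = n := by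
        rw [hndef]; exact_mod_cast h2
      rw [← hndef]
      field_simp
      linarith
    linarith
  unfold starProbOn
  rw [Nat.card_eq_fintype_card, Fintype.card_subtype, ← hndef]
  set E := (Finset.univ.filter (fun φ : Fin (k + l + 1) → V =>
        IsStarEmb k l A φ ∧ x ∈ Set.range φ ∧ y ∈ Set.range φ)).card
  set Nc := (Finset.univ.filter (fun u => A y u ∨ A u y)).card
  set Wc := (Finset.univ.filter (fun u => ¬ (A x u ∨ A u x))).card
  have hC : (0 : ℝ) < (Nat.choose (k + l) k : ℝ) := by
    exact_mod_cast Nat.choose_pos (Nat.le_add_right k l)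
  have hcR : (Nat.choose (k + l) k : ℝ) * E
      ≤ Nc * ((((k : ℝ) + l) * ((k : ℝ) + l - 1)) * (Wc : ℝ) ^ (k + l - 2)) := by
    have h : (((k + l) * (k + l) - (k + l) : ℕ) : ℝ) = ((k : ℝ) + l) * ((k : ℝ) + l - 1) := by
      rw [Nat.cast_sub (Nat.le_mul_self _)]
      push_cast
      ring
    rw [← h]
    exact_mod_cast hcount
  have hm1 : (0 : ℝ) ≤ ((k : ℝ) + l) * ((k : ℝ) + l - 1) := by
    have : (6 : ℝ) ≤ (k : ℝ) + l := by exact_mod_cast hm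
    nlinarith
  obtain ⟨r, hr⟩ : ∃ r, k + l = r + 2 := ⟨k + l - 2, by omega⟩
  have hrs : k + l - 2 = r := by omega
  have hpow : n ^ (k + l + 1) = n ^ 2 * (n * n ^ r) := by
    rw [hr]; ring
  rw [hrs] at hcR ⊢
  rw [hpow]
  generalize (Nat.choose (k + l) k : ℝ) = C at *
  have hstep : n ^ 2 * ((E : ℝ) / (n ^ 2 * (n * n ^ r)))
      ≤ (((k : ℝ) + l) * ((k : ℝ) + l - 1) / C) * ((Nc : ℝ) / n) * ((Wc : ℝ) / n) ^ r := by
    have e1 : n ^ 2 * ((E : ℝ) / (n ^ 2 * (n * n ^ r))) = (C * E) / (C * (n * n ^ r)) := by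
      field_simp
    have e2 : (((k : ℝ) + l) * ((k : ℝ) + l - 1) / C) * ((Nc : ℝ) / n) * ((Wc : ℝ) / n) ^ r
        = (Nc * ((((k : ℝ) + l) * ((k : ℝ) + l - 1)) * (Wc : ℝ) ^ r)) / (C * (n * n ^ r)) := by
      rw [div_pow]
      field_simp
    rw [e1, e2]
    exact div_le_div_of_nonneg_right hcR (by positivity)
  refine hstep.trans ?_
  have hq : 0 ≤ ((k : ℝ) + l) * ((k : ℝ) + l - 1) / C := div_nonneg hm1 hC.le
  have hN0 : (0 : ℝ) ≤ (Nc : ℝ) / n := div_nonneg (Nat.cast_nonneg _) hn0.le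
  have hW0 : (0 : ℝ) ≤ (Wc : ℝ) / n := div_nonneg (Nat.cast_nonneg _) hn0.le
  exact mul_le_mul (mul_le_mul_of_nonneg_left hN hq) (pow_le_pow_left₀ hW0 hW r)
    (pow_nonneg hW0 r) (mul_nonneg hq (hN0.trans hN))
end

section
/- Suppose l ≥ 2. Then for every Z ⊆ V(G) with |Z| ≥ 2 and every vertex v ∈ V(G) \ Z: Pr[φ ∈ 𝒮 and φ(I ∪ O) ⊆ Z | φ(c) = v] ≤ (1 − ρ(Z)) · (μ(Z) − ρ⁻_Z(v))^k · (ρ⁻_Z(v))^l ≤ (1 − ρ(Z)) · λ₀ · μ(Z)^m. -/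
open scoped BigOperators

open Finset in
open scoped Classical in
/-- Fixing two coordinates of a random choice to lie in a relation. -/
lemma pair_count {ι V : Type*} [Fintype ι] [DecidableEq ι] (S : ι → Finset V)
    (Q : Finset (V × V)) (F : Finset (ι → V)) (i j : ι) (hij : i ≠ j)
    (hF : ∀ φ ∈ F, φ ∈ Fintype.piFinset S ∧ (φ i, φ j) ∈ Q) :
    F.card * ((S i).card * (S j).card)
      ≤ (Q ∩ (S i ×ˢ S j)).card * ∏ t, (S t).card := by
  rw [← Fintype.card_piFinset, ← card_product, ← card_product, ← card_product]
  refine card_le_card_of_injOn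
    (fun x => ((x.1 i, x.1 j), Function.update (Function.update x.1 i x.2.1) j x.2.2)) ?_ ?_
  · rintro ⟨φ, x, y⟩ h
    simp only [coe_product, Set.mem_prod, mem_coe] at h
    obtain ⟨h1, h2, h3⟩ := h
    obtain ⟨h4, h5⟩ := hF _ h1
    rw [Fintype.mem_piFinset] at h4
    simp only [coe_product, Set.mem_prod, mem_coe, mem_inter, mem_product, Fintype.mem_piFinset]
    refine ⟨⟨h5, h4 i, h4 j⟩, fun t => ?_⟩
    by_cases htj : t = j
    · subst htj; simpa using h3
    · by_cases hti : t = i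
      · subst hti; simpa [htj] using h2
      · simpa [htj, hti] using h4 t
  · rintro ⟨φ, x, y⟩ _ ⟨ψ, x', y'⟩ _ h
    simp only [Prod.mk.injEq] at h
    obtain ⟨⟨h1, h2⟩, h3⟩ := h
    have hx := congrFun h3 i
    have hy := congrFun h3 j
    simp [hij] at hx
    simp at hy
    subst hx hy
    simp only [Prod.mk.injEq, and_true]
    funext t
    by_cases htj : t = j
    · subst htj; exact h2
    · by_cases hti : t = i
      · subst hti; exact h1
      · simpa [htj, hti] using congrFun h3 t

lemma amgm_kl (k l : ℕ) (hk : 1 ≤ k) (hl : 1 ≤ l) (x y : ℝ) (hx : 0 ≤ x) (hy : 0 ≤ y) :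
    x ^ k * y ^ l ≤ lam0 k l * (x + y) ^ (k + l) := by
  have hk' : (0:ℝ) < k := by exact_mod_cast hk
  have hl' : (0:ℝ) < l := by exact_mod_cast hl
  have h := Real.geom_mean_le_arith_mean2_weighted (w₁ := (k:ℝ)/(k+l)) (w₂ := (l:ℝ)/(k+l))
    (p₁ := x / k) (p₂ := y / l) (by positivity) (by positivity) (by positivity) (by positivity)
    (by field_simp)
  have e : (k:ℝ)/(k+l) * (x/k) + (l:ℝ)/(k+l) * (y/l) = (x+y)/(k+l) := by field_simp
  rw [e] at h
  have h2 := pow_le_pow_left₀ (by positivity) h (k+l)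
  rw [mul_pow, ← Real.rpow_natCast, ← Real.rpow_natCast, ← Real.rpow_mul (by positivity),
    ← Real.rpow_mul (by positivity)] at h2
  have e1 : (k:ℝ)/(k+l) * ((k+l : ℕ):ℝ) = k := by push_cast; field_simp
  have e2 : (l:ℝ)/(k+l) * ((k+l : ℕ):ℝ) = l := by push_cast; field_simp
  rw [e1, e2, Real.rpow_natCast, Real.rpow_natCast, div_pow, div_pow, div_pow] at h2
  calc x ^ k * y ^ l = (x ^ k / k ^ k * (y ^ l / l ^ l)) * (k ^ k * l ^ l) := by field_simp
    _ ≤ ((x + y) ^ (k + l) / (k + l) ^ (k + l)) * (k ^ k * l ^ l) := by gcongr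
    _ = _ := by unfold lam0; ring

open Finset in
open scoped Classical in
lemma main_count (k l : ℕ) (hk : 2 ≤ k) (hl : 2 ≤ l)
    (V : Type) [Fintype V] (A : V → V → Prop)
    (Z : Finset V) (v : V) (B : Finset V) (hB : B = Z.filter (fun u => A u v))
    (hopp : ∀ u v, A u v → ¬ A v u)
    (Q : Finset (V × V))
    (hQ : Q = (Z ×ˢ Z).filter (fun p => p.1 ≠ p.2 ∧ ¬ (A p.1 p.2 ∨ A p.2 p.1)))
    (F : Finset (Fin (k + l + 1) → V))
    (hF : ∀ φ ∈ F, IsStarEmb k l A φ ∧ φ 0 = v ∧ ∀ a, a ≠ 0 → φ a ∈ Z) :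
    F.card * Z.card ^ 2 ≤ Q.card * ((Z \ B).card ^ k * B.card ^ l) := by
  set C := Z \ B with hC
  let S : Fin (k + l + 1) → Finset V :=
    Fin.cons {v} (fun i : Fin (k + l) => if i.val < k then C else B)
  have hprod : ∏ t, (S t).card = C.card ^ k * B.card ^ l := by
    rw [Fin.prod_univ_succ]
    simp only [S, Fin.cons_zero, Fin.cons_succ, card_singleton, one_mul]
    rw [Fin.prod_univ_add]
    simp
  have hS : ∀ φ ∈ F, φ ∈ Fintype.piFinset S := by
    intro φ hφ
    obtain ⟨⟨_, h1⟩, h2, h3⟩ := hF φ hφ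
    rw [Fintype.mem_piFinset]
    intro t
    refine Fin.cases ?_ (fun i => ?_) t
    · simp [S, h2]
    · have hz := h3 i.succ (Fin.succ_ne_zero i)
      simp only [S, Fin.cons_succ]
      split_ifs with hi
      · have : A v (φ i.succ) := by
          rw [← h2, ← h1]; left; simp; omega
        simp only [hC, hB, mem_sdiff, mem_filter, not_and]
        exact ⟨hz, fun _ => hopp _ _ this⟩
      · have : A (φ i.succ) v := by
          rw [← h2, ← h1]; right; simp; omega
        simp only [hB, mem_filter]
        exact ⟨hz, this⟩
  have hpair : ∀ i j : Fin (k + l), i ≠ j → ∀ φ ∈ F,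
      φ ∈ Fintype.piFinset S ∧ (φ i.succ, φ j.succ) ∈ Q := by
    intro i j hij φ hφ
    refine ⟨hS φ hφ, ?_⟩
    obtain ⟨⟨h0, h1⟩, h2, h3⟩ := hF φ hφ
    simp only [hQ, mem_filter, mem_product]
    refine ⟨⟨h3 _ (Fin.succ_ne_zero _), h3 _ (Fin.succ_ne_zero _)⟩, ?_, ?_⟩
    · intro h; exact hij (Fin.succ_injective _ (h0 h))
    · rw [← h1, ← h1]; simp [StarArc]
  have key : ∀ i j : Fin (k + l), i ≠ j →
      F.card * ((S i.succ).card * (S j.succ).card)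
        ≤ (Q ∩ (S i.succ ×ˢ S j.succ)).card * (C.card ^ k * B.card ^ l) := by
    intro i j hij
    rw [← hprod]
    exact pair_count S Q F _ _ (fun h => hij (Fin.succ_injective _ h)) (hpair i j hij)
  have k1 := key ⟨0, by omega⟩ ⟨1, by omega⟩ (by simp)
  have k2 := key ⟨0, by omega⟩ ⟨k, by omega⟩ (by simp; omega)
  have k3 := key ⟨k, by omega⟩ ⟨0, by omega⟩ (by simp; omega)
  have k4 := key ⟨k, by omega⟩ ⟨k+1, by omega⟩ (by simp)
  have s0 : S (Fin.succ ⟨0, by omega⟩) = C := by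
    simp only [S, Fin.cons_succ]; rw [if_pos]; show 0 < k; omega
  have s1 : S (Fin.succ ⟨1, by omega⟩) = C := by
    simp only [S, Fin.cons_succ]; rw [if_pos]; show 1 < k; omega
  have s2 : S (Fin.succ ⟨k, by omega⟩) = B := by
    simp only [S, Fin.cons_succ]; rw [if_neg]; simp
  have s3 : S (Fin.succ ⟨k+1, by omega⟩) = B := by
    simp only [S, Fin.cons_succ]; rw [if_neg]; simp
  rw [s0, s1] at k1
  rw [s0, s2] at k2
  rw [s2, s0] at k3
  rw [s2, s3] at k4
  have hBZ : B ⊆ Z := by rw [hB]; exact filter_subset _ _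
  have hzc : Z.card = C.card + B.card := by
    rw [hC]; exact (card_sdiff_add_card_eq_card hBZ).symm
  have hdis : ∀ u, u ∈ C → u ∉ B := fun u hu => (mem_sdiff.1 hu).2
  have hq : (Q ∩ C ×ˢ C).card + (Q ∩ C ×ˢ B).card + (Q ∩ B ×ˢ C).card + (Q ∩ B ×ˢ B).card
      ≤ Q.card := by
    rw [← card_union_of_disjoint, ← card_union_of_disjoint, ← card_union_of_disjoint]
    · apply card_le_card
      intro p hp
      simp only [mem_union, mem_inter] at hp
      tauto
    all_goals
      rw [disjoint_left]
      intro p hp hp'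
      simp only [mem_union, mem_inter, mem_product] at hp hp'
      have := hdis p.1
      have := hdis p.2
      tauto
  have hm := Nat.mul_le_mul_right (C.card ^ k * B.card ^ l) hq
  rw [hzc]
  nlinarith

theorem stmt17 (k l : ℕ) (hl : 2 ≤ l) (hlk : l ≤ k) (hm : 6 ≤ k + l)
    (V : Type) [Fintype V] (A : V → V → Prop)
    (hirr : Irreflexive A) (hopp : ∀ u v, A u v → ¬ A v u) (hn : 1 ≤ Fintype.card V)
    (Z : Set V) (hZ : 2 ≤ Nat.card Z) (v : V) (hv : v ∉ Z) :
    sCondOn k l A v (fun φ => ∀ a : Fin (k + l + 1), a ≠ 0 → φ a ∈ Z)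
        ≤ (1 - densSet A Z) * (muSet Z - rhoMIn A Z v) ^ k * rhoMIn A Z v ^ l ∧
    (1 - densSet A Z) * (muSet Z - rhoMIn A Z v) ^ k * rhoMIn A Z v ^ l
        ≤ (1 - densSet A Z) * lam0 k l * muSet Z ^ (k + l) := by
  classical
  let Zf : Finset V := Finset.univ.filter (· ∈ Z)
  let B : Finset V := Zf.filter (fun u => A u v)
  let Q : Finset (V × V) :=
    (Zf ×ˢ Zf).filter (fun p => p.1 ≠ p.2 ∧ ¬ (A p.1 p.2 ∨ A p.2 p.1))
  let E : Finset (V × V) :=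
    (Zf ×ˢ Zf).filter (fun p => A p.1 p.2 ∨ A p.2 p.1)
  let F : Finset (Fin (k + l + 1) → V) := Finset.univ.filter
    (fun φ => IsStarEmb k l A φ ∧ φ 0 = v ∧ ∀ a, a ≠ 0 → φ a ∈ Z)
  have hzc : Nat.card Z = Zf.card := by
    rw [Nat.card_eq_fintype_card, Fintype.card_subtype]
  have hbc : Nat.card {u : V // A u v ∧ u ∈ Z} = B.card := by
    rw [Nat.card_eq_fintype_card, Fintype.card_subtype]
    congr 1; ext u; simp [B, Zf, and_comm]
  have hec : Nat.card {p : V × V // p.1 ∈ Z ∧ p.2 ∈ Z ∧ (A p.1 p.2 ∨ A p.2 p.1)} = E.card := by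
    rw [Nat.card_eq_fintype_card, Fintype.card_subtype]
    congr 1; ext u; simp [E, Zf, and_assoc]
  have hfc : Nat.card {φ : Fin (k + l + 1) → V // IsStarEmb k l A φ ∧ φ 0 = v ∧
      ∀ a : Fin (k + l + 1), a ≠ 0 → φ a ∈ Z} = F.card := by
    rw [Nat.card_eq_fintype_card, Fintype.card_subtype]
  have hcount := main_count k l (by omega) hl V A Zf v B rfl hopp Q rfl F
    (fun φ hφ => by
      obtain ⟨_, h1, h2, h3⟩ := Finset.mem_filter.1 hφ
      exact ⟨h1, h2, fun a ha => by simpa [Zf] using h3 a ha⟩)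
  have hBZ : B ⊆ Zf := Finset.filter_subset _ _
  have hCc : (Zf \ B).card + B.card = Zf.card := Finset.card_sdiff_add_card_eq_card hBZ
  have hQE : Q.card + E.card = Zf.card * Zf.card - Zf.card := by
    rw [← Finset.offDiag_card, ← Finset.card_union_of_disjoint]
    · congr 1
      ext p
      have : p.1 = p.2 → ¬ (A p.1 p.2 ∨ A p.2 p.1) := by
        intro h; rw [h]; have := hirr p.2; tauto
      simp only [Q, E, Finset.mem_union, Finset.mem_filter, Finset.mem_product,
        Finset.mem_offDiag]
      tauto
    · rw [Finset.disjoint_left]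
      intro p hp hp'
      simp only [Q, E, Finset.mem_filter] at hp hp'
      tauto
  rw [hzc] at hZ
  set z := Zf.card with hz
  have hzz : z ≤ z * z := Nat.le_mul_self z
  have hQE' : (Q.card : ℝ) + E.card = z * (z - 1) := by
    have : Q.card + E.card + z = z * z := by omega
    have : (Q.card : ℝ) + E.card + z = z * z := by exact_mod_cast this
    linarith
  have hz2 : (2:ℝ) ≤ z := by exact_mod_cast hZ
  have hpos : (0:ℝ) < z * (z - 1) := by apply mul_pos <;> linarith
  have hdens : 1 - densSet A Z = Q.card / (z * (z - 1)) := by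
    unfold densSet
    rw [hec, hzc, Nat.cast_choose_two]
    have h1 : (z:ℝ) - 1 ≠ 0 := by linarith
    have h2 : (z:ℝ) ≠ 0 := by linarith
    field_simp
    linarith
  have hn' : (0:ℝ) < Fintype.card V := by exact_mod_cast hn
  have hmu : muSet Z = z / Fintype.card V := by unfold muSet; rw [hzc]
  have hrho : rhoMIn A Z v = B.card / Fintype.card V := by unfold rhoMIn; rw [hbc]
  have hsub : muSet Z - rhoMIn A Z v = (Zf \ B).card / Fintype.card V := by
    rw [hmu, hrho, ← hCc]; push_cast; ring
  have hdn : 0 ≤ 1 - densSet A Z := by rw [hdens]; positivity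
  constructor
  · rw [hsub, hrho, hdens]
    unfold sCondOn
    rw [hfc, div_pow, div_pow, pow_add]
    have hc : (F.card : ℝ) * z ^ 2 ≤ Q.card * ((Zf \ B).card ^ k * B.card ^ l) := by
      exact_mod_cast hcount
    have : (F.card : ℝ) ≤ Q.card / (z * (z - 1)) * ((Zf \ B).card ^ k * B.card ^ l) := by
      rw [div_mul_eq_mul_div, le_div_iff₀ hpos]
      refine le_trans ?_ hc
      have : (0:ℝ) ≤ F.card := by positivity
      nlinarith
    calc (F.card : ℝ) / _ ≤ (Q.card / (z * (z - 1)) * ((Zf \ B).card ^ k * B.card ^ l)) /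
          ((Fintype.card V : ℝ) ^ k * (Fintype.card V : ℝ) ^ l) := by gcongr
      _ = _ := by field_simp
  · have h := amgm_kl k l (by omega) (by omega) (muSet Z - rhoMIn A Z v) (rhoMIn A Z v)
      (by rw [hsub]; positivity) (by rw [hrho]; positivity)
    rw [sub_add_cancel] at h
    rw [mul_assoc, mul_assoc]
    exact mul_le_mul_of_nonneg_left h hdn
end

section
/- Suppose s(v) ≥ OPT(k,l) for every vertex v of G, and suppose X ≠ ∅ and Y ≠ ∅. Then ((k−1)^{k−1} l^l/(m−1)^{m−1}) · (1−d) · α^m · (1−α) ≥ s₂(G) + s_X(G). -/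
open scoped BigOperators

namespace StarAux

/-- Weighted AM-GM for natural exponents. -/
theorem amgm (p q : ℕ) (a b : ℝ) (ha : 0 ≤ a) (hb : 0 ≤ b) :
    a ^ p * b ^ q * ((p : ℝ) + q) ^ (p + q) ≤ (p : ℝ) ^ p * (q : ℝ) ^ q * (a + b) ^ (p + q) := by
  rcases Nat.eq_zero_or_pos p with rfl | hp
  · simp
    rw [mul_comm]
    gcongr
    linarith
  rcases Nat.eq_zero_or_pos q with rfl | hq
  · simp
    rw [mul_comm]
    gcongr
    linarith
  have hp' : (0 : ℝ) < p := by exact_mod_cast hp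
  have hq' : (0 : ℝ) < q := by exact_mod_cast hq
  have key := Real.geom_mean_le_arith_mean2_weighted
    (w₁ := (p : ℝ) / (p + q)) (w₂ := (q : ℝ) / (p + q)) (p₁ := a / p) (p₂ := b / q)
    (by positivity) (by positivity) (by positivity) (by positivity) (by field_simp)
  have e1 : (p : ℝ) / (p + q) * (a / p) + (q : ℝ) / (p + q) * (b / q) = (a + b) / (p + q) := by
    field_simp
  rw [e1] at key
  have key2 := pow_le_pow_left₀ (by positivity) key (p + q)
  have e2 : ((a / p) ^ ((p : ℝ) / (p + q)) * (b / q) ^ ((q : ℝ) / (p + q))) ^ (p + q)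
      = (a / p) ^ p * (b / q) ^ q := by
    rw [mul_pow, ← Real.rpow_natCast, ← Real.rpow_natCast, ← Real.rpow_mul (by positivity),
      ← Real.rpow_mul (by positivity), ← Real.rpow_natCast, ← Real.rpow_natCast]
    congr 2 <;> · push_cast; field_simp
  rw [e2, div_pow, div_pow, div_pow, div_mul_div_comm, div_le_div_iff₀ (by positivity)
    (by positivity)] at key2
  linarith

theorem amgm' (p q : ℕ) (a b t : ℝ) (ha : 0 ≤ a) (hb : 0 ≤ b) (hpq : 0 < p + q)
    (ht : a + b ≤ t) :
    a ^ p * b ^ q ≤ (p : ℝ) ^ p * (q : ℝ) ^ q / ((p : ℝ) + q) ^ (p + q) * t ^ (p + q) := by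
  have h := amgm p q a b ha hb
  have hpq' : (0 : ℝ) < (p : ℝ) + q := by exact_mod_cast hpq
  rw [div_mul_eq_mul_div, le_div_iff₀ (by positivity)]
  refine h.trans ?_
  gcongr

theorem pow_le_exp (n : ℕ) (hn : 0 < n) : ((n : ℝ) + 1) ^ n ≤ Real.exp 1 * (n : ℝ) ^ n := by
  have hn' : (0 : ℝ) < n := by exact_mod_cast hn
  have h1 : (1 : ℝ) / n + 1 ≤ Real.exp (1 / n) := Real.add_one_le_exp _
  have h2 := pow_le_pow_left₀ (by positivity) h1 n
  rw [← Real.exp_nat_mul] at h2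
  have e : (n : ℝ) * (1 / n) = 1 := by field_simp
  rw [e] at h2
  have e2 : ((n : ℝ) + 1) = (1 / n + 1) * n := by field_simp; ring
  rw [e2, mul_pow]
  gcongr

theorem lam0_pos (k l : ℕ) (hl : 1 ≤ l) (hlk : l ≤ k) : 0 < lam0 k l := by
  have hl' : (0 : ℝ) < l := by exact_mod_cast hl
  have hk' : (0 : ℝ) < k := by exact_mod_cast (by omega : 0 < k)
  unfold lam0
  positivity

/-- constant for an out-leaf -/
noncomputable def kapO (k l : ℕ) : ℝ :=
  ((k : ℝ) - 1) ^ (k - 1) * (l : ℝ) ^ l / ((k : ℝ) + l - 1) ^ (k + l - 1)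

/-- constant for an in-leaf -/
noncomputable def kapI (k l : ℕ) : ℝ :=
  (k : ℝ) ^ k * ((l : ℝ) - 1) ^ (l - 1) / ((k : ℝ) + l - 1) ^ (k + l - 1)

theorem pow_aux (k l : ℕ) (hl : 1 ≤ l) (hlk : l ≤ k) :
    ((k : ℝ) + l) ^ (k + l) ≤
      Real.exp 1 * ((k : ℝ) + l) * ((k : ℝ) + l - 1) ^ (k + l - 1) := by
  obtain ⟨m, hm⟩ : ∃ m, k + l = m + 1 := ⟨k + l - 1, by omega⟩
  have hm' : (k : ℝ) + l = m + 1 := by exact_mod_cast hm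
  rw [hm', hm]
  have := pow_le_exp m (by omega)
  simp only [Nat.add_sub_cancel, add_sub_cancel_right]
  rw [pow_succ]
  have h0 : (0 : ℝ) ≤ (m : ℝ) + 1 := by positivity
  nlinarith

theorem kO_le (k l : ℕ) (hl : 1 ≤ l) (hlk : l ≤ k) :
    (k : ℝ) * kapO k l ≤ Real.exp 1 * ((k : ℝ) + l) * lam0 k l := by
  have hl' : (1 : ℝ) ≤ l := by exact_mod_cast hl
  have hk' : (1 : ℝ) ≤ k := by exact_mod_cast (by omega : 1 ≤ k)
  have h := pow_aux k l hl hlk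
  unfold kapO lam0
  have hpos : (0 : ℝ) < (k : ℝ) + l - 1 := by linarith
  rw [mul_div_assoc', mul_div_assoc', div_le_div_iff₀ (by positivity) (by positivity)]
  have h1 : (k : ℝ) * ((k : ℝ) - 1) ^ (k - 1) ≤ (k : ℝ) ^ k := by
    calc (k : ℝ) * ((k : ℝ) - 1) ^ (k - 1) ≤ k * (k : ℝ) ^ (k - 1) := by
          gcongr
          linarith
      _ = (k : ℝ) ^ k := by rw [← pow_succ']; congr 1; omega
  calc (k : ℝ) * (((k : ℝ) - 1) ^ (k - 1) * (l : ℝ) ^ l) * ((k : ℝ) + l) ^ (k + l)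
      = (k : ℝ) * ((k : ℝ) - 1) ^ (k - 1) * (l : ℝ) ^ l * ((k : ℝ) + l) ^ (k + l) := by ring
    _ ≤ (k : ℝ) ^ k * (l : ℝ) ^ l *
        (Real.exp 1 * ((k : ℝ) + l) * ((k : ℝ) + l - 1) ^ (k + l - 1)) := by gcongr
    _ = _ := by ring

theorem kI_le (k l : ℕ) (hl : 1 ≤ l) (hlk : l ≤ k) :
    (l : ℝ) * kapI k l ≤ Real.exp 1 * ((k : ℝ) + l) * lam0 k l := by
  have hl' : (1 : ℝ) ≤ l := by exact_mod_cast hl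
  have hk' : (1 : ℝ) ≤ k := by exact_mod_cast (by omega : 1 ≤ k)
  have h := pow_aux k l hl hlk
  unfold kapI lam0
  have hpos : (0 : ℝ) < (k : ℝ) + l - 1 := by linarith
  rw [mul_div_assoc', mul_div_assoc', div_le_div_iff₀ (by positivity) (by positivity)]
  have h1 : (l : ℝ) * ((l : ℝ) - 1) ^ (l - 1) ≤ (l : ℝ) ^ l := by
    calc (l : ℝ) * ((l : ℝ) - 1) ^ (l - 1) ≤ l * (l : ℝ) ^ (l - 1) := by
          gcongr
          linarith
      _ = (l : ℝ) ^ l := by rw [← pow_succ']; congr 1; omega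
  calc (l : ℝ) * ((k : ℝ) ^ k * ((l : ℝ) - 1) ^ (l - 1)) * ((k : ℝ) + l) ^ (k + l)
      = (k : ℝ) ^ k * ((l : ℝ) * ((l : ℝ) - 1) ^ (l - 1)) * ((k : ℝ) + l) ^ (k + l) := by ring
    _ ≤ (k : ℝ) ^ k * (l : ℝ) ^ l *
        (Real.exp 1 * ((k : ℝ) + l) * ((k : ℝ) + l - 1) ^ (k + l - 1)) := by gcongr
    _ = _ := by ring

theorem kapO_nonneg (k l : ℕ) (hl : 1 ≤ l) (hlk : l ≤ k) : 0 ≤ kapO k l := by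
  have hl' : (1 : ℝ) ≤ l := by exact_mod_cast hl
  have hk' : (1 : ℝ) ≤ k := by exact_mod_cast (by omega : 1 ≤ k)
  have h1 : (0 : ℝ) ≤ (k : ℝ) - 1 := by linarith
  have hpos : (0 : ℝ) < (k : ℝ) + l - 1 := by linarith
  unfold kapO
  positivity

theorem kapI_nonneg (k l : ℕ) (hl : 1 ≤ l) (hlk : l ≤ k) : 0 ≤ kapI k l := by
  have hl' : (1 : ℝ) ≤ l := by exact_mod_cast hl
  have hk' : (1 : ℝ) ≤ k := by exact_mod_cast (by omega : 1 ≤ k)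
  have h1 : (0 : ℝ) ≤ (l : ℝ) - 1 := by linarith
  have hpos : (0 : ℝ) < (k : ℝ) + l - 1 := by linarith
  unfold kapI
  positivity

/-- the lower bound for OPT -/
theorem OPT_ge (k l : ℕ) (hl : 1 ≤ l) (hlk : l ≤ k) :
    lam0 k l / Real.exp 1 ≤ ((k : ℝ) + l + 1) * OPT k l := by
  have hl' : (1 : ℝ) ≤ l := by exact_mod_cast hl
  have hk' : (1 : ℝ) ≤ k := by exact_mod_cast (by omega : 1 ≤ k)
  have hl0 := lam0_pos k l hl hlk
  have hM : (0 : ℝ) < (k : ℝ) + l + 1 := by linarith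
  set a : ℝ := 1 / ((k : ℝ) + l + 1) with ha
  have ha0 : 0 ≤ a := by positivity
  have ha2 : a ≤ 1 / 2 := by
    rw [ha]; apply one_div_le_one_div_of_le <;> linarith
  have h1a : 1 - a = ((k : ℝ) + l) / ((k : ℝ) + l + 1) := by rw [ha]; field_simp; ring
  have hpow : 1 / Real.exp 1 ≤ (1 - a) ^ (k + l) := by
    rw [h1a, div_pow, div_le_div_iff₀ (Real.exp_pos 1) (by positivity)]
    have := pow_le_exp (k + l) (by omega)
    push_cast at this
    linarith
  have h1a0 : 0 ≤ 1 - a := by linarith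
  have main : lam0 k l * (a * (1 - a) ^ (k + l)) ≤ OPT k l := by
    unfold OPT
    split_ifs with hkl
    · subst hkl
      have e : lam0 k k = 1 / 2 ^ (2 * k) := by
        unfold lam0
        rw [← pow_add, ← two_mul, ← two_mul, mul_pow]
        field_simp
      rw [e, two_mul]
      gcongr
      refine le_trans ?_ (le_csSup ⟨2, ?_⟩ ⟨a, ⟨ha0, by linarith⟩, rfl⟩)
      · have : 0 ≤ (1 - a) * a ^ (k + k) := by positivity
        linarith
      · rintro y ⟨b, ⟨hb0, hb1⟩, rfl⟩
        have h1 : b * (1 - b) ^ (k + k) ≤ 1 :=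
          mul_le_one₀ hb1 (pow_nonneg (by linarith) _) (pow_le_one₀ (by linarith) (by linarith))
        have h2 : (1 - b) * b ^ (k + k) ≤ 1 :=
          mul_le_one₀ (by linarith) (pow_nonneg (by linarith) _)
            (pow_le_one₀ (by linarith) (by linarith))
        linarith
    · have hd1 : (k : ℝ) / (k + l) ≤ 1 := by rw [div_le_one (by linarith)]; linarith
      have hd0 : 0 ≤ (k : ℝ) / (k + l) := by positivity
      have e : lam0 k l = ((k : ℝ) / (k + l)) ^ k * (1 - (k : ℝ) / (k + l)) ^ l := by
        have : 1 - (k : ℝ) / (k + l) = l / (k + l) := by field_simp; ring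
        rw [this, div_pow, div_pow, div_mul_div_comm, ← pow_add]
        rfl
      have hk := kapO_nonneg k l hl hlk
      refine le_trans ?_ (le_csSup ⟨1 + kapO k l, ?_⟩ ⟨a, ⟨ha0, ha2⟩, _, ⟨hd0, le_refl _⟩, rfl⟩)
      · have hd1' : 0 ≤ 1 - (k : ℝ) / (k + l) := by linarith
        change _ ≤ _ + kapO k l * (1 - a) * a ^ (k + l) * (1 - (k : ℝ) / (k + l))
        have : 0 ≤ kapO k l * (1 - a) * a ^ (k + l) * (1 - (k : ℝ) / (k + l)) := by positivity
        rw [e]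
        linarith
      · rintro y ⟨b, ⟨hb0, hb1⟩, d, ⟨hd0, hdk⟩, rfl⟩
        have hd1 : d ≤ 1 := hdk.trans hd1
        have hb' : 0 ≤ 1 - b := by linarith
        have hd' : 0 ≤ 1 - d := by linarith
        have q1 : (1 - b) ^ (k + l) ≤ 1 := pow_le_one₀ hb' (by linarith)
        have q2 : d ^ k ≤ 1 := pow_le_one₀ hd0 hd1
        have q3 : (1 - d) ^ l ≤ 1 := pow_le_one₀ hd' (by linarith)
        have q4 : b ^ (k + l) ≤ 1 := pow_le_one₀ hb0 (by linarith)
        have h1 : b * (1 - b) ^ (k + l) * d ^ k * (1 - d) ^ l ≤ 1 * 1 * 1 * 1 := by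
          gcongr
          linarith
        change _ + kapO k l * (1 - b) * b ^ (k + l) * (1 - d) ≤ _
        have h2 : kapO k l * (1 - b) * b ^ (k + l) * (1 - d) ≤ kapO k l * 1 * 1 * 1 := by
          gcongr
          · linarith
          · linarith
        linarith
  calc lam0 k l / Real.exp 1 = lam0 k l * (1 / Real.exp 1) := by ring
    _ ≤ lam0 k l * (1 - a) ^ (k + l) := by gcongr
    _ = ((k : ℝ) + l + 1) * (lam0 k l * (a * (1 - a) ^ (k + l))) := by rw [ha]; field_simp
    _ ≤ _ := by gcongr

end StarAux

namespace StarAux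

open Classical in
/-- out-degree into `Z` -/
noncomputable def dp {V : Type} [Fintype V] (A : V → V → Prop) (Z : Set V) (v : V) : ℕ :=
  (Finset.univ.filter (fun u => A v u ∧ u ∈ Z)).card

open Classical in
/-- in-degree from `Z` -/
noncomputable def dm {V : Type} [Fintype V] (A : V → V → Prop) (Z : Set V) (v : V) : ℕ :=
  (Finset.univ.filter (fun u => A u v ∧ u ∈ Z)).card

open Classical in
/-- non-neighbours in `Z` -/
noncomputable def tz {V : Type} [Fintype V] (A : V → V → Prop) (Z : Set V) (v : V) : ℕ :=
  (Finset.univ.filter (fun u => ¬ A v u ∧ ¬ A u v ∧ u ∈ Z)).card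

theorem deg_sum {V : Type} [Fintype V] (A : V → V → Prop) (hopp : ∀ u v, A u v → ¬ A v u)
    (Z : Set V) (v : V) : dp A Z v + dm A Z v + tz A Z v = Nat.card Z := by
  classical
  unfold dp dm tz
  rw [Nat.card_eq_fintype_card, Fintype.card_subtype]
  rw [← Finset.card_union_of_disjoint, ← Finset.card_union_of_disjoint]
  · congr 1
    ext u
    simp only [Finset.mem_union, Finset.mem_filter, Finset.mem_univ, true_and]
    tauto
  · rw [Finset.disjoint_left]
    intro u
    simp only [Finset.mem_union, Finset.mem_filter, Finset.mem_univ, true_and]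
    tauto
  · rw [Finset.disjoint_left]
    intro u
    simp only [Finset.mem_filter, Finset.mem_univ, true_and]
    have := hopp u v
    tauto

/-- number of maps with a property -/
noncomputable def cnt {ι V : Type} (P : (ι → V) → Prop) : ℕ := Nat.card {φ : ι → V // P φ}

theorem cnt_le_prod {ι V : Type} [Fintype ι] [Fintype V] (P : (ι → V) → Prop)
    (B : ι → Finset V) (h : ∀ φ, P φ → ∀ a, φ a ∈ B a) : cnt P ≤ ∏ a, (B a).card := by
  classical
  unfold cnt
  rw [Nat.card_eq_fintype_card, Fintype.card_subtype, ← Fintype.card_piFinset]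
  apply Finset.card_le_card
  intro φ hφ
  simp only [Finset.mem_filter, Finset.mem_univ, true_and] at hφ
  rw [Fintype.mem_piFinset]
  exact h φ hφ

theorem cnt_fiber {ι V : Type} [Fintype ι] [Fintype V] (P : (ι → V) → Prop) (z : ι) :
    cnt P = ∑ v, cnt (fun φ => P φ ∧ φ z = v) := by
  classical
  unfold cnt
  simp only [Nat.card_eq_fintype_card, Fintype.card_subtype]
  rw [Finset.card_eq_sum_card_fiberwise (f := fun φ : ι → V => φ z) (t := Finset.univ)
    (by intro x _; simp)]
  simp only [Finset.filter_filter]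

theorem cnt_mono {ι V : Type} [Fintype ι] [Fintype V] {P Q : (ι → V) → Prop}
    (h : ∀ φ, P φ → Q φ) : cnt P ≤ cnt Q := by
  classical
  unfold cnt
  simp only [Nat.card_eq_fintype_card, Fintype.card_subtype]
  apply Finset.card_le_card
  intro φ
  simpa using h φ

theorem cnt_zero {ι V : Type} {P : (ι → V) → Prop}
    (h : ∀ φ, ¬ P φ) : cnt P = 0 := by
  unfold cnt
  have : IsEmpty {φ : ι → V // P φ} := ⟨fun x => h _ x.2⟩
  exact Nat.card_of_isEmpty

theorem cnt_or {ι V : Type} [Fintype ι] [Fintype V] (P Q : (ι → V) → Prop) :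
    cnt (fun φ => P φ ∨ Q φ) ≤ cnt P + cnt Q := by
  classical
  unfold cnt
  simp only [Nat.card_eq_fintype_card, Fintype.card_subtype]
  rw [Finset.filter_or]
  exact Finset.card_union_le _ _

theorem cnt_add_disj {ι V : Type} [Fintype ι] [Fintype V] (P Q : (ι → V) → Prop)
    (h : ∀ φ, P φ → ¬ Q φ) : cnt P + cnt Q = cnt (fun φ => P φ ∨ Q φ) := by
  classical
  unfold cnt
  simp only [Nat.card_eq_fintype_card, Fintype.card_subtype]
  rw [Finset.filter_or, Finset.card_union_of_disjoint]
  rw [Finset.disjoint_left]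
  intro φ
  simpa using h φ

theorem cnt_exists {ι V κ : Type} [Fintype ι] [Fintype V] (s : Finset κ)
    (P : κ → (ι → V) → Prop) :
    cnt (fun φ => ∃ z ∈ s, P z φ) ≤ ∑ z ∈ s, cnt (P z) := by
  classical
  unfold cnt
  simp only [Nat.card_eq_fintype_card, Fintype.card_subtype]
  refine le_trans (Finset.card_le_card ?_) (Finset.card_biUnion_le)
  intro φ
  simp

/-- out-leaves -/
def OL (k l : ℕ) : Finset (Fin (k + l + 1)) := Finset.univ.filter (fun a => 1 ≤ a.val ∧ a.val ≤ k)
/-- in-leaves -/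
def IL (k l : ℕ) : Finset (Fin (k + l + 1)) := Finset.univ.filter (fun a => k + 1 ≤ a.val)

theorem card_IL (k l : ℕ) : (IL k l).card = l := by
  unfold IL
  rw [← Finset.card_map Fin.valEmbedding]
  have : (Finset.univ.filter (fun a : Fin (k + l + 1) => k + 1 ≤ a.val)).map Fin.valEmbedding
      = Finset.Ico (k + 1) (k + l + 1) := by
    ext x
    simp only [Finset.mem_map, Finset.mem_filter, Finset.mem_univ, true_and, Finset.mem_Ico,
      Fin.valEmbedding_apply]
    constructor
    · rintro ⟨a, ha, rfl⟩
      exact ⟨ha, a.2⟩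
    · rintro ⟨h1, h2⟩
      exact ⟨⟨x, h2⟩, h1, rfl⟩
  rw [this, Nat.card_Ico]
  omega

theorem card_OL (k l : ℕ) : (OL k l).card = k := by
  unfold OL
  rw [← Finset.card_map Fin.valEmbedding]
  have : (Finset.univ.filter (fun a : Fin (k + l + 1) => 1 ≤ a.val ∧ a.val ≤ k)).map
      Fin.valEmbedding = Finset.Ico 1 (k + 1) := by
    ext x
    simp only [Finset.mem_map, Finset.mem_filter, Finset.mem_univ, true_and, Finset.mem_Ico,
      Fin.valEmbedding_apply]
    constructor
    · rintro ⟨a, ha, rfl⟩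
      omega
    · rintro ⟨h1, h2⟩
      exact ⟨⟨x, by omega⟩, ⟨h1, Nat.lt_succ_iff.mp h2⟩, rfl⟩
  rw [this, Nat.card_Ico]
  omega

theorem mem_OL {k l : ℕ} {a : Fin (k + l + 1)} : a ∈ OL k l ↔ 1 ≤ a.val ∧ a.val ≤ k := by
  simp [OL]

theorem mem_IL {k l : ℕ} {a : Fin (k + l + 1)} : a ∈ IL k l ↔ k + 1 ≤ a.val := by
  simp [IL]

theorem leaf_cases {k l : ℕ} (a : Fin (k + l + 1)) : a = 0 ∨ a ∈ OL k l ∨ a ∈ IL k l := by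
  rw [mem_OL, mem_IL, Fin.ext_iff, Fin.val_zero]
  omega

theorem prod_split (k l : ℕ) (g : Fin (k + l + 1) → ℕ) :
    ∏ a, g a = g 0 * (∏ a ∈ OL k l, g a) * ∏ a ∈ IL k l, g a := by
  classical
  have h : (Finset.univ : Finset (Fin (k + l + 1))) = ({0} ∪ OL k l) ∪ IL k l := by
    ext a
    have := leaf_cases a
    simp only [Finset.mem_univ, Finset.mem_union, Finset.mem_singleton, true_iff]
    tauto
  rw [h, Finset.prod_union, Finset.prod_union, Finset.prod_singleton]
  · rw [Finset.disjoint_left]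
    intro a
    rw [Finset.mem_singleton, mem_OL, Fin.ext_iff, Fin.val_zero]
    omega
  · rw [Finset.disjoint_left]
    intro a
    rw [Finset.mem_union, Finset.mem_singleton, mem_OL, mem_IL, Fin.ext_iff, Fin.val_zero]
    omega

theorem emb_out {k l : ℕ} {V : Type} {A : V → V → Prop} {φ : Fin (k + l + 1) → V}
    (h : IsStarEmb k l A φ) {a : Fin (k + l + 1)} (ha : a ∈ OL k l) : A (φ 0) (φ a) := by
  rw [mem_OL] at ha
  exact (h.2 0 a).1 (Or.inl ⟨by simp, ha⟩)

theorem emb_in {k l : ℕ} {V : Type} {A : V → V → Prop} {φ : Fin (k + l + 1) → V}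
    (h : IsStarEmb k l A φ) {a : Fin (k + l + 1)} (ha : a ∈ IL k l) : A (φ a) (φ 0) := by
  rw [mem_IL] at ha
  exact (h.2 a 0).1 (Or.inr ⟨by simp, ha⟩)

theorem emb_indep {k l : ℕ} {V : Type} {A : V → V → Prop} {φ : Fin (k + l + 1) → V}
    (h : IsStarEmb k l A φ) {a b : Fin (k + l + 1)} (ha : a ≠ 0) (hb : b ≠ 0) :
    ¬ A (φ a) (φ b) := by
  rw [← h.2 a b]
  have ha' : a.val ≠ 0 := fun h => ha (Fin.ext (by simpa using h))
  have hb' : b.val ≠ 0 := fun h => hb (Fin.ext (by simpa using h))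
  rintro (h | h)
  · exact ha' h.1
  · exact hb' h.1

theorem ne_zero_OL {k l : ℕ} {a : Fin (k + l + 1)} (ha : a ∈ OL k l) : a ≠ 0 := by
  rintro rfl
  rw [mem_OL] at ha
  simp at ha

theorem ne_zero_IL {k l : ℕ} {a : Fin (k + l + 1)} (ha : a ∈ IL k l) : a ≠ 0 := by
  rintro rfl
  rw [mem_IL] at ha
  simp at ha

theorem not_OL_IL {k l : ℕ} {a : Fin (k + l + 1)} (ha : a ∈ OL k l) : a ∉ IL k l := by
  rw [mem_OL] at ha
  rw [mem_IL]
  omega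

/-- stars centered at `c` with leaves in `Z` -/
theorem center_count (k l : ℕ) {V : Type} [Fintype V] (A : V → V → Prop) (Z : Set V) (c : V) :
    cnt (fun φ => IsStarEmb k l A φ ∧ φ 0 = c ∧ ∀ a, a ≠ 0 → φ a ∈ Z)
      ≤ dp A Z c ^ k * dm A Z c ^ l := by
  classical
  refine (cnt_le_prod _ (fun a => if a = 0 then {c} else if a ∈ OL k l then
    Finset.univ.filter (fun u => A c u ∧ u ∈ Z) else
    Finset.univ.filter (fun u => A u c ∧ u ∈ Z)) ?_).trans ?_
  · rintro φ ⟨h, h0, hZ⟩ a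
    split_ifs with h1 h2
    · simp [h1, h0]
    · simpa [← h0, hZ a h1] using emb_out h h2
    · have : a ∈ IL k l := by have := leaf_cases a; tauto
      simpa [← h0, hZ a h1] using emb_in h this
  · rw [prod_split]
    rw [Finset.prod_congr rfl (g := fun _ => dp A Z c) (s₁ := OL k l),
      Finset.prod_congr rfl (g := fun _ => dm A Z c) (s₁ := IL k l)]
    · simp [card_OL, card_IL]
    · intro a ha
      rw [if_neg (ne_zero_IL ha), if_neg (fun h => not_OL_IL h ha)]
      rfl
    · intro a ha
      rw [if_neg (ne_zero_OL ha), if_pos ha]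
      rfl

theorem leafO_count (k l : ℕ) (hl : 1 ≤ l) (hlk : l ≤ k) {V : Type} [Fintype V]
    (A : V → V → Prop) (hopp : ∀ u v, A u v → ¬ A v u) (Z : Set V)
    (c v : V) (z : Fin (k + l + 1)) (hz : z ∈ OL k l) :
    (cnt (fun φ => IsStarEmb k l A φ ∧ φ 0 = c ∧ φ z = v ∧ ∀ a, a ≠ 0 → φ a ∈ Z) : ℝ)
      ≤ kapO k l * (tz A Z v : ℝ) ^ (k + l - 1) := by
  classical
  set p := (Finset.univ.filter (fun u => A c u ∧ ¬ A v u ∧ ¬ A u v ∧ u ∈ Z)).card with hp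
  set q := (Finset.univ.filter (fun u => A u c ∧ ¬ A v u ∧ ¬ A u v ∧ u ∈ Z)).card with hq
  have h1 : cnt (fun φ => IsStarEmb k l A φ ∧ φ 0 = c ∧ φ z = v ∧ ∀ a, a ≠ 0 → φ a ∈ Z)
      ≤ p ^ (k - 1) * q ^ l := by
    refine (cnt_le_prod _ (fun a => if a = 0 then {c} else if a = z then {v} else
      if a ∈ OL k l then
      Finset.univ.filter (fun u => A c u ∧ ¬ A v u ∧ ¬ A u v ∧ u ∈ Z) else
      Finset.univ.filter (fun u => A u c ∧ ¬ A v u ∧ ¬ A u v ∧ u ∈ Z)) ?_).trans ?_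
    · rintro φ ⟨h, h0, hv, hZ⟩ a
      have hz0 := ne_zero_OL hz
      split_ifs with h1 h2 h3
      · simp [h1, h0]
      · simp [h2, hv]
      · simpa [← h0, ← hv, hZ a h1, emb_indep h hz0 h1, emb_indep h h1 hz0] using emb_out h h3
      · have : a ∈ IL k l := by have := leaf_cases a; tauto
        simpa [← h0, ← hv, hZ a h1, emb_indep h hz0 h1, emb_indep h h1 hz0] using emb_in h this
    · rw [prod_split, ← Finset.mul_prod_erase _ _ hz]
      rw [Finset.prod_congr rfl (g := fun _ => p) (s₁ := (OL k l).erase z),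
        Finset.prod_congr rfl (g := fun _ => q) (s₁ := IL k l)]
      · simp [card_OL, card_IL, Finset.card_erase_of_mem hz, ne_zero_OL hz]
      · intro a ha
        rw [if_neg (ne_zero_IL ha), if_neg, if_neg (fun h => not_OL_IL h ha)]
        rintro rfl
        exact not_OL_IL hz ha
      · intro a ha
        rw [Finset.mem_erase] at ha
        rw [if_neg (ne_zero_OL ha.2), if_neg ha.1, if_pos ha.2]
  have h2 : p + q ≤ tz A Z v := by
    rw [hp, hq, ← Finset.card_union_of_disjoint]
    · apply Finset.card_le_card
      intro u
      simp only [Finset.mem_union, Finset.mem_filter, Finset.mem_univ, true_and]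
      tauto
    · rw [Finset.disjoint_left]
      intro u
      simp only [Finset.mem_filter, Finset.mem_univ, true_and]
      have := hopp u c
      tauto
  have h3 := amgm' (k - 1) l p q (tz A Z v) (by positivity) (by positivity) (by omega)
    (by exact_mod_cast h2)
  have e1 : ((k - 1 : ℕ) : ℝ) = (k : ℝ) - 1 := by
    rw [Nat.cast_sub (by omega)]; simp
  have e2 : k - 1 + l = k + l - 1 := by omega
  rw [e1, e2, (by ring : (k : ℝ) - 1 + l = k + l - 1)] at h3
  refine le_trans ?_ h3
  exact_mod_cast h1

theorem leafI_count (k l : ℕ) (hl : 1 ≤ l) (hlk : l ≤ k) {V : Type} [Fintype V]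
    (A : V → V → Prop) (hopp : ∀ u v, A u v → ¬ A v u) (Z : Set V)
    (c v : V) (z : Fin (k + l + 1)) (hz : z ∈ IL k l) :
    (cnt (fun φ => IsStarEmb k l A φ ∧ φ 0 = c ∧ φ z = v ∧ ∀ a, a ≠ 0 → φ a ∈ Z) : ℝ)
      ≤ kapI k l * (tz A Z v : ℝ) ^ (k + l - 1) := by
  classical
  set p := (Finset.univ.filter (fun u => A c u ∧ ¬ A v u ∧ ¬ A u v ∧ u ∈ Z)).card with hp
  set q := (Finset.univ.filter (fun u => A u c ∧ ¬ A v u ∧ ¬ A u v ∧ u ∈ Z)).card with hq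
  have h1 : cnt (fun φ => IsStarEmb k l A φ ∧ φ 0 = c ∧ φ z = v ∧ ∀ a, a ≠ 0 → φ a ∈ Z)
      ≤ p ^ k * q ^ (l - 1) := by
    refine (cnt_le_prod _ (fun a => if a = 0 then {c} else if a = z then {v} else
      if a ∈ OL k l then
      Finset.univ.filter (fun u => A c u ∧ ¬ A v u ∧ ¬ A u v ∧ u ∈ Z) else
      Finset.univ.filter (fun u => A u c ∧ ¬ A v u ∧ ¬ A u v ∧ u ∈ Z)) ?_).trans ?_
    · rintro φ ⟨h, h0, hv, hZ⟩ a
      have hz0 := ne_zero_IL hz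
      split_ifs with h1 h2 h3
      · simp [h1, h0]
      · simp [h2, hv]
      · simpa [← h0, ← hv, hZ a h1, emb_indep h hz0 h1, emb_indep h h1 hz0] using emb_out h h3
      · have : a ∈ IL k l := by have := leaf_cases a; tauto
        simpa [← h0, ← hv, hZ a h1, emb_indep h hz0 h1, emb_indep h h1 hz0] using emb_in h this
    · rw [prod_split, ← Finset.mul_prod_erase _ _ hz]
      rw [Finset.prod_congr rfl (g := fun _ => p) (s₁ := OL k l),
        Finset.prod_congr rfl (g := fun _ => q) (s₁ := (IL k l).erase z)]
      · simp [card_OL, card_IL, Finset.card_erase_of_mem hz, ne_zero_IL hz]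
      · intro a ha
        rw [Finset.mem_erase] at ha
        rw [if_neg (ne_zero_IL ha.2), if_neg ha.1, if_neg (fun h => not_OL_IL h ha.2)]
      · intro a ha
        rw [if_neg (ne_zero_OL ha), if_neg, if_pos ha]
        rintro rfl
        exact not_OL_IL ha hz
  have h2 : p + q ≤ tz A Z v := by
    rw [hp, hq, ← Finset.card_union_of_disjoint]
    · apply Finset.card_le_card
      intro u
      simp only [Finset.mem_union, Finset.mem_filter, Finset.mem_univ, true_and]
      tauto
    · rw [Finset.disjoint_left]
      intro u
      simp only [Finset.mem_filter, Finset.mem_univ, true_and]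
      have := hopp u c
      tauto
  have h3 := amgm' k (l - 1) p q (tz A Z v) (by positivity) (by positivity) (by omega)
    (by exact_mod_cast h2)
  have e1 : ((l - 1 : ℕ) : ℝ) = (l : ℝ) - 1 := by
    rw [Nat.cast_sub (by omega)]; simp
  have e2 : k + (l - 1) = k + l - 1 := by omega
  rw [e1, e2, (by ring : (k : ℝ) + (l - 1) = k + l - 1)] at h3
  refine le_trans ?_ h3
  exact_mod_cast h1

/-- stars with leaf `z` (an out-leaf) at `v`, leaves in `Z` -/
theorem leafO_sum (k l : ℕ) (hl : 1 ≤ l) (hlk : l ≤ k) {V : Type} [Fintype V]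
    (A : V → V → Prop) (hopp : ∀ u v, A u v → ¬ A v u) (Z : Set V)
    (v : V) (z : Fin (k + l + 1)) (hz : z ∈ OL k l) :
    (cnt (fun φ => IsStarEmb k l A φ ∧ φ z = v ∧ ∀ a, a ≠ 0 → φ a ∈ Z) : ℝ)
      ≤ dm A Set.univ v * (kapO k l * (tz A Z v : ℝ) ^ (k + l - 1)) := by
  classical
  rw [cnt_fiber _ 0]
  push_cast
  calc _ ≤ ∑ c, if A c v then kapO k l * (tz A Z v : ℝ) ^ (k + l - 1) else 0 := by
        apply Finset.sum_le_sum
        intro c _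
        split_ifs with hc
        · refine le_trans ?_ (leafO_count k l hl hlk A hopp Z c v z hz)
          exact_mod_cast cnt_mono (by tauto)
        · rw [cnt_zero]; simp
          rintro φ ⟨⟨h, hv, _⟩, h0⟩
          apply hc
          rw [← h0, ← hv]
          exact emb_out h hz
    _ = _ := by
        rw [← Finset.sum_filter, Finset.sum_const, nsmul_eq_mul]
        simp [dm]

theorem leafI_sum (k l : ℕ) (hl : 1 ≤ l) (hlk : l ≤ k) {V : Type} [Fintype V]
    (A : V → V → Prop) (hopp : ∀ u v, A u v → ¬ A v u) (Z : Set V)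
    (v : V) (z : Fin (k + l + 1)) (hz : z ∈ IL k l) :
    (cnt (fun φ => IsStarEmb k l A φ ∧ φ z = v ∧ ∀ a, a ≠ 0 → φ a ∈ Z) : ℝ)
      ≤ dp A Set.univ v * (kapI k l * (tz A Z v : ℝ) ^ (k + l - 1)) := by
  classical
  rw [cnt_fiber _ 0]
  push_cast
  calc _ ≤ ∑ c, if A v c then kapI k l * (tz A Z v : ℝ) ^ (k + l - 1) else 0 := by
        apply Finset.sum_le_sum
        intro c _
        split_ifs with hc
        · refine le_trans ?_ (leafI_count k l hl hlk A hopp Z c v z hz)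
          exact_mod_cast cnt_mono (by tauto)
        · rw [cnt_zero]; simp
          rintro φ ⟨⟨h, hv, _⟩, h0⟩
          apply hc
          rw [← h0, ← hv]
          exact emb_in h hz
    _ = _ := by
        rw [← Finset.sum_filter, Finset.sum_const, nsmul_eq_mul]
        simp [dp]

/-- stars centered at `c` with leaf `z` in `X`, where nonneighbourhoods in `X` are small -/
theorem centerO_sum (k l : ℕ) (hl : 1 ≤ l) (hlk : l ≤ k) {V : Type} [Fintype V]
    (A : V → V → Prop) (hopp : ∀ u v, A u v → ¬ A v u) (X : Set V) (T : ℝ)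
    (hT : ∀ x ∈ X, (tz A Set.univ x : ℝ) ≤ T) (c : V) (z : Fin (k + l + 1)) (hz : z ∈ OL k l) :
    (cnt (fun φ => IsStarEmb k l A φ ∧ φ 0 = c ∧ φ z ∈ X) : ℝ)
      ≤ dp A X c * (kapO k l * T ^ (k + l - 1)) := by
  classical
  have hk := kapO_nonneg k l hl hlk
  rw [cnt_fiber _ z]
  push_cast
  calc _ ≤ ∑ w, if A c w ∧ w ∈ X then kapO k l * T ^ (k + l - 1) else 0 := by
        apply Finset.sum_le_sum
        intro w _
        split_ifs with hc
        · have h1 := leafO_count k l hl hlk A hopp Set.univ c w z hz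
          have h2 : kapO k l * (tz A Set.univ w : ℝ) ^ (k + l - 1)
              ≤ kapO k l * T ^ (k + l - 1) := by
            gcongr
            exact hT w hc.2
          refine le_trans ?_ (h1.trans h2)
          exact_mod_cast cnt_mono (by simp; tauto)
        · rw [cnt_zero]; simp
          rintro φ ⟨⟨h, h0, hX⟩, hw⟩
          apply hc
          rw [← h0, ← hw]
          exact ⟨emb_out h hz, hX⟩
    _ = _ := by
        rw [← Finset.sum_filter, Finset.sum_const, nsmul_eq_mul]
        rfl

theorem centerI_sum (k l : ℕ) (hl : 1 ≤ l) (hlk : l ≤ k) {V : Type} [Fintype V]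
    (A : V → V → Prop) (hopp : ∀ u v, A u v → ¬ A v u) (X : Set V) (T : ℝ)
    (hT : ∀ x ∈ X, (tz A Set.univ x : ℝ) ≤ T) (c : V) (z : Fin (k + l + 1)) (hz : z ∈ IL k l) :
    (cnt (fun φ => IsStarEmb k l A φ ∧ φ 0 = c ∧ φ z ∈ X) : ℝ)
      ≤ dm A X c * (kapI k l * T ^ (k + l - 1)) := by
  classical
  have hk := kapI_nonneg k l hl hlk
  rw [cnt_fiber _ z]
  push_cast
  calc _ ≤ ∑ w, if A w c ∧ w ∈ X then kapI k l * T ^ (k + l - 1) else 0 := by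
        apply Finset.sum_le_sum
        intro w _
        split_ifs with hc
        · have h1 := leafI_count k l hl hlk A hopp Set.univ c w z hz
          have h2 : kapI k l * (tz A Set.univ w : ℝ) ^ (k + l - 1)
              ≤ kapI k l * T ^ (k + l - 1) := by
            gcongr
            exact hT w hc.2
          refine le_trans ?_ (h1.trans h2)
          exact_mod_cast cnt_mono (by simp; tauto)
        · rw [cnt_zero]; simp
          rintro φ ⟨⟨h, h0, hX⟩, hw⟩
          apply hc
          rw [← h0, ← hw]
          exact ⟨emb_in h hz, hX⟩
    _ = _ := by
        rw [← Finset.sum_filter, Finset.sum_const, nsmul_eq_mul]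
        rfl

/-- stars centered at `c`: all leaves in the complement of `X`, or some leaf in `X` -/
theorem center_split (k l : ℕ) (hl : 1 ≤ l) (hlk : l ≤ k) {V : Type} [Fintype V]
    (A : V → V → Prop) (hopp : ∀ u v, A u v → ¬ A v u) (X : Set V) (T : ℝ) (hT0 : 0 ≤ T)
    (hT : ∀ x ∈ X, (tz A Set.univ x : ℝ) ≤ T) (c : V) :
    (cnt (fun φ => IsStarEmb k l A φ ∧ φ 0 = c) : ℝ)
      ≤ (dp A Xᶜ c : ℝ) ^ k * (dm A Xᶜ c : ℝ) ^ l +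
        (Real.exp 1 * ((k : ℝ) + l) * lam0 k l) * (dp A X c + dm A X c) * T ^ (k + l - 1) := by
  classical
  have h1 : cnt (fun φ => IsStarEmb k l A φ ∧ φ 0 = c) ≤
      cnt (fun φ => IsStarEmb k l A φ ∧ φ 0 = c ∧ ∀ a, a ≠ 0 → φ a ∈ Xᶜ) +
      ((∑ z ∈ OL k l, cnt (fun φ => IsStarEmb k l A φ ∧ φ 0 = c ∧ φ z ∈ X)) +
       (∑ z ∈ IL k l, cnt (fun φ => IsStarEmb k l A φ ∧ φ 0 = c ∧ φ z ∈ X))) := by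
    refine le_trans ?_ (Nat.add_le_add_left (Nat.add_le_add
      (cnt_exists (OL k l) (fun z φ => IsStarEmb k l A φ ∧ φ 0 = c ∧ φ z ∈ X))
      (cnt_exists (IL k l) (fun z φ => IsStarEmb k l A φ ∧ φ 0 = c ∧ φ z ∈ X))) _)
    refine le_trans ?_ (Nat.add_le_add_left (cnt_or _ _) _)
    refine le_trans ?_ (cnt_or _ _)
    apply cnt_mono
    rintro φ ⟨h, h0⟩
    by_cases hh : ∀ a, a ≠ 0 → φ a ∈ Xᶜ
    · exact Or.inl ⟨h, h0, hh⟩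
    · right
      push Not at hh
      obtain ⟨a, ha, haX⟩ := hh
      have haX' : φ a ∈ X := by simpa using haX
      rcases leaf_cases a with h' | h' | h'
      · exact absurd h' ha
      · exact Or.inl ⟨a, h', h, h0, haX'⟩
      · exact Or.inr ⟨a, h', h, h0, haX'⟩
  have h1' : (cnt (fun φ => IsStarEmb k l A φ ∧ φ 0 = c) : ℝ) ≤
      cnt (fun φ => IsStarEmb k l A φ ∧ φ 0 = c ∧ ∀ a, a ≠ 0 → φ a ∈ Xᶜ) +
      ((∑ z ∈ OL k l, (cnt (fun φ => IsStarEmb k l A φ ∧ φ 0 = c ∧ φ z ∈ X) : ℝ)) +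
       (∑ z ∈ IL k l, (cnt (fun φ => IsStarEmb k l A φ ∧ φ 0 = c ∧ φ z ∈ X) : ℝ))) := by
    exact_mod_cast h1
  have h2 : (cnt (fun φ => IsStarEmb k l A φ ∧ φ 0 = c ∧ ∀ a, a ≠ 0 → φ a ∈ Xᶜ) : ℝ) ≤
      (dp A Xᶜ c : ℝ) ^ k * (dm A Xᶜ c : ℝ) ^ l := by
    exact_mod_cast center_count k l A Xᶜ c
  have h3 := Finset.sum_le_sum (fun z hz => centerO_sum k l hl hlk A hopp X T hT c z hz)
  have h4 := Finset.sum_le_sum (fun z hz => centerI_sum k l hl hlk A hopp X T hT c z hz)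
  rw [Finset.sum_const, card_OL, nsmul_eq_mul] at h3
  rw [Finset.sum_const, card_IL, nsmul_eq_mul] at h4
  have h5 : (k : ℝ) * (dp A X c * (kapO k l * T ^ (k + l - 1))) ≤
      (Real.exp 1 * ((k : ℝ) + l) * lam0 k l) * (dp A X c * T ^ (k + l - 1)) := by
    calc _ = (k * kapO k l) * (dp A X c * T ^ (k + l - 1)) := by ring
      _ ≤ _ := by
        exact mul_le_mul_of_nonneg_right (kO_le k l hl hlk) (by positivity)
  have h6 : (l : ℝ) * (dm A X c * (kapI k l * T ^ (k + l - 1))) ≤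
      (Real.exp 1 * ((k : ℝ) + l) * lam0 k l) * (dm A X c * T ^ (k + l - 1)) := by
    calc _ = (l * kapI k l) * (dm A X c * T ^ (k + l - 1)) := by ring
      _ ≤ _ := by
        exact mul_le_mul_of_nonneg_right (kI_le k l hl hlk) (by positivity)
  linarith

end StarAux

namespace StarAux

theorem rho_eq {V : Type} [Fintype V] (A : V → V → Prop) (hopp : ∀ u v, A u v → ¬ A v u) (v : V) :
    rho A v = ((dp A Set.univ v : ℝ) + dm A Set.univ v) / Fintype.card V := by
  classical
  unfold rho
  congr 1
  rw [← Nat.cast_add]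
  congr 1
  unfold dp dm
  rw [← Finset.card_union_of_disjoint, Nat.card_eq_fintype_card, Fintype.card_subtype]
  · congr 1
    ext u
    simp
  · rw [Finset.disjoint_left]
    intro u
    simp only [Finset.mem_filter, Finset.mem_univ, true_and]
    have := hopp u v
    tauto

theorem rhoMIn_eq {V : Type} [Fintype V] (A : V → V → Prop) (B : Set V) (v : V) :
    rhoMIn A B v = (dm A B v : ℝ) / Fintype.card V := by
  classical
  unfold rhoMIn dm
  rw [Nat.card_eq_fintype_card, Fintype.card_subtype]

theorem dm_split {V : Type} [Fintype V] (A : V → V → Prop) (X : Set V) (v : V) :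
    dm A Set.univ v = dm A X v + dm A Xᶜ v := by
  classical
  unfold dm
  rw [← Finset.card_union_of_disjoint]
  · congr 1
    ext u
    simp only [Finset.mem_union, Finset.mem_filter, Finset.mem_univ, true_and, Set.mem_univ,
      Set.mem_compl_iff]
    tauto
  · rw [Finset.disjoint_left]
    intro u
    simp only [Finset.mem_filter, Finset.mem_univ, true_and, Set.mem_compl_iff]
    tauto

theorem card_split {V : Type} [Fintype V] (X : Set V) :
    Nat.card X + Nat.card (Xᶜ : Set V) = Fintype.card V := by
  classical
  rw [Nat.card_eq_fintype_card, Nat.card_eq_fintype_card, Fintype.card_compl_set]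
  have := set_fintype_card_le_univ X
  omega

theorem num1 (m : ℕ) (hm : 6 ≤ m) : (m : ℝ) * (1 / 2) ^ (m - 2) * (1 / 4) ≤ 6 / 64 := by
  induction m, hm using Nat.le_induction with
  | base => norm_num
  | succ n hn ih =>
    obtain ⟨j, rfl⟩ : ∃ j, n = j + 2 := ⟨n - 2, by omega⟩
    have e : j + 2 + 1 - 2 = j + 1 := by omega
    rw [e, pow_succ]
    simp only [Nat.add_sub_cancel] at ih
    push_cast at ih ⊢
    have : (0 : ℝ) ≤ (1 / 2) ^ j := by positivity
    have hj : (0 : ℝ) ≤ j := by positivity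
    nlinarith [mul_nonneg hj this]

theorem num2 (m : ℕ) (hm : 6 ≤ m) : (m : ℝ) * (1 / 3) ^ (m - 1) ≤ 6 / 243 := by
  induction m, hm using Nat.le_induction with
  | base => norm_num
  | succ n hn ih =>
    obtain ⟨j, rfl⟩ : ∃ j, n = j + 1 := ⟨n - 1, by omega⟩
    have e : j + 1 + 1 - 1 = j + 1 := by omega
    rw [e, pow_succ]
    simp only [Nat.add_sub_cancel] at ih
    push_cast at ih ⊢
    have : (0 : ℝ) ≤ (1 / 3) ^ j := by positivity
    have hj : (0 : ℝ) ≤ j := by positivity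
    nlinarith [mul_nonneg hj this]

theorem inv_e : (0.3678 : ℝ) ≤ 1 / Real.exp 1 := by
  rw [le_div_iff₀ (Real.exp_pos 1)]
  have := Real.exp_one_lt_d9
  linarith

theorem step1 (m : ℕ) (hm : 6 ≤ m) (r : ℝ) (h1 : 1 / 2 ≤ r)
    (h : 1 / Real.exp 1 ≤ r ^ m + Real.exp 1 * m * (r * (1 - r) ^ (m - 1))) : 2 / 3 ≤ r := by
  by_contra hr
  push Not at hr
  have a1 : r ^ m ≤ (2 / 3) ^ 6 := by
    calc r ^ m ≤ (2 / 3) ^ m := by gcongr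
      _ ≤ (2 / 3) ^ 6 := pow_le_pow_of_le_one (by norm_num) (by norm_num) hm
  have a2 : r * (1 - r) ^ (m - 1) ≤ (1 / 2) ^ (m - 2) * (1 / 4) := by
    have e : m - 1 = (m - 2) + 1 := by omega
    rw [e, pow_succ]
    have q1 : (1 - r) ^ (m - 2) ≤ (1 / 2) ^ (m - 2) :=
      pow_le_pow_left₀ (by linarith) (by linarith) _
    have q2 : r * (1 - r) ≤ 1 / 4 := by nlinarith [sq_nonneg (r - 1 / 2)]
    calc r * ((1 - r) ^ (m - 2) * (1 - r)) = (1 - r) ^ (m - 2) * (r * (1 - r)) := by ring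
      _ ≤ _ := by
        apply mul_le_mul q1 q2 (mul_nonneg (by linarith) (by linarith)) (by positivity)
  have a3 : Real.exp 1 * m * (r * (1 - r) ^ (m - 1)) ≤ 2.7183 * (6 / 64) := by
    calc _ ≤ Real.exp 1 * m * ((1 / 2) ^ (m - 2) * (1 / 4)) := by gcongr
      _ = Real.exp 1 * (m * (1 / 2) ^ (m - 2) * (1 / 4)) := by ring
      _ ≤ 2.7183 * (6 / 64) := by
        gcongr
        · have := Real.exp_one_lt_d9
          linarith
        · exact num1 m hm
  have := inv_e
  norm_num at a1 a3 this h
  linarith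

theorem pointwise (j : ℕ) (X g d t : ℝ) (hX : 0 < X) (hg : X ≤ j * g)
    (ht : 0 ≤ t) (hd : d + t ≤ X) (hd0 : 0 ≤ d) : (d + g) * t ^ j ≤ g * X ^ j := by
  have hg0 : 0 < g := by
    by_contra hh
    push Not at hh
    have : (j : ℝ) * g ≤ 0 := mul_nonpos_of_nonneg_of_nonpos (by positivity) hh
    linarith
  have h1 : 1 + (j : ℝ) * (d / X) ≤ (1 + d / X) ^ j :=
    one_add_mul_le_pow (by have : 0 ≤ d / X := by positivity
                           linarith) j
  have h2 : d + g ≤ g * (1 + (j : ℝ) * (d / X)) := by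
    have : d ≤ j * g * (d / X) := by
      calc d = X * (d / X) := by field_simp
        _ ≤ _ := by gcongr
    linarith
  calc (d + g) * t ^ j ≤ (g * (1 + d / X) ^ j) * t ^ j := by
        gcongr
        exact h2.trans (by gcongr)
    _ = g * ((1 + d / X) * t) ^ j := by rw [mul_pow]; ring
    _ ≤ g * X ^ j := by
        have hdX : 0 ≤ d / X := by positivity
        gcongr
        calc (1 + d / X) * t ≤ (1 + d / X) * (X - d) := by gcongr; linarith
          _ = X - d * d / X := by field_simp; ring
          _ ≤ X := by
            have : 0 ≤ d * d / X := by positivity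
            linarith

theorem one_mem {k l : ℕ} (hl : 1 ≤ l) (hlk : l ≤ k) : (1 : Fin (k + l + 1)) ∈ OL k l := by
  rw [mem_OL]
  have : (1 : Fin (k + l + 1)).val = 1 := by
    rw [Fin.val_one']
    exact Nat.mod_eq_of_lt (by omega)
  omega

open Fin.NatCast in
theorem in_mem {k l : ℕ} (hl : 1 ≤ l) : ((k + 1 : ℕ) : Fin (k + l + 1)) ∈ IL k l := by
  rw [mem_IL, Fin.val_natCast, Nat.mod_eq_of_lt (by omega)]

section
variable (k l : ℕ) (hl : 1 ≤ l) (hlk : l ≤ k) (hm : 6 ≤ k + l)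
  {V : Type} [Fintype V] (A : V → V → Prop) (hopp : ∀ u v, A u v → ¬ A v u)
  (hn : 1 ≤ Fintype.card V)

theorem tz_univ {V : Type} [Fintype V] (A : V → V → Prop) (hopp : ∀ u v, A u v → ¬ A v u)
    (hn : 1 ≤ Fintype.card V) (v : V) :
    (tz A Set.univ v : ℝ) = (1 - rho A v) * Fintype.card V := by
  have h := deg_sum A hopp Set.univ v
  rw [Nat.card_univ, Nat.card_eq_fintype_card] at h
  have h' : (dp A Set.univ v : ℝ) + dm A Set.univ v + tz A Set.univ v = Fintype.card V := by
    exact_mod_cast h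
  have hn' : (0 : ℝ) < Fintype.card V := by exact_mod_cast hn
  rw [rho_eq A hopp]
  field_simp
  linarith

open Fin.NatCast in
theorem leaf_bound (k l : ℕ) (hl : 1 ≤ l) (hlk : l ≤ k)
    {V : Type} [Fintype V] (A : V → V → Prop) (hopp : ∀ u v, A u v → ¬ A v u)
    (hn : 1 ≤ Fintype.card V) (v : V) :
    l * sCond k l A ((k + 1 : ℕ) : Fin (k + l + 1)) v + k * sCond k l A 1 v
      ≤ lam0 k l * (Real.exp 1 * ((k : ℝ) + l) * (rho A v * (1 - rho A v) ^ (k + l - 1))) := by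
  have hn' : (0 : ℝ) < Fintype.card V := by exact_mod_cast hn
  have hO := leafO_sum k l hl hlk A hopp Set.univ v 1 (one_mem hl hlk)
  have hI := leafI_sum k l hl hlk A hopp Set.univ v _ (in_mem (k := k) hl)
  simp only [Set.mem_univ, implies_true, and_true] at hO hI
  have kO := kO_le k l hl hlk
  have kI := kI_le k l hl hlk
  have hr : (dp A Set.univ v : ℝ) + dm A Set.univ v = rho A v * Fintype.card V := by
    rw [rho_eq A hopp]; field_simp
  have ht := tz_univ A hopp hn v
  unfold sCond
  unfold cnt at hO hI
  rw [← mul_div_assoc, ← mul_div_assoc, ← add_div, div_le_iff₀ (by positivity)]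
  set t : ℝ := (tz A Set.univ v : ℝ) ^ (k + l - 1) with htt
  have ht0 : 0 ≤ t := by positivity
  calc _ ≤ (l : ℝ) * (dp A Set.univ v * (kapI k l * t)) + k * (dm A Set.univ v * (kapO k l * t)) := by
        gcongr
    _ = (l * kapI k l) * (dp A Set.univ v * t) + (k * kapO k l) * (dm A Set.univ v * t) := by ring
    _ ≤ (Real.exp 1 * ((k : ℝ) + l) * lam0 k l) * (dp A Set.univ v * t) +
        (Real.exp 1 * ((k : ℝ) + l) * lam0 k l) * (dm A Set.univ v * t) :=
        add_le_add (mul_le_mul_of_nonneg_right kI (by positivity))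
          (mul_le_mul_of_nonneg_right kO (by positivity))
    _ = (Real.exp 1 * ((k : ℝ) + l) * lam0 k l) * ((dp A Set.univ v + dm A Set.univ v) * t) := by
        ring
    _ = _ := by
        rw [hr, htt, ht, mul_pow]
        have e : (Fintype.card V : ℝ) ^ (k + l)
            = (Fintype.card V : ℝ) ^ (k + l - 1) * Fintype.card V := by
          rw [← pow_succ]; congr 1; omega
        rw [e]
        ring

theorem vert_bound (k l : ℕ) (hl : 1 ≤ l) (hlk : l ≤ k)
    {V : Type} [Fintype V] (A : V → V → Prop) (hopp : ∀ u v, A u v → ¬ A v u)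
    (hn : 1 ≤ Fintype.card V) (hvert : ∀ v : V, OPT k l ≤ sVert k l A v) (v : V) :
    lam0 k l * (1 / Real.exp 1) ≤ sCond k l A 0 v +
      lam0 k l * (Real.exp 1 * ((k : ℝ) + l) * (rho A v * (1 - rho A v) ^ (k + l - 1))) := by
  have h1 := OPT_ge k l hl hlk
  have h2 := leaf_bound k l hl hlk A hopp hn v
  have h3 := hvert v
  unfold sVert at h3
  have hM : (0 : ℝ) < (k : ℝ) + l + 1 := by positivity
  rw [le_div_iff₀ hM] at h3
  have e : lam0 k l * (1 / Real.exp 1) = lam0 k l / Real.exp 1 := by ring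
  rw [e]
  linarith

theorem rho_big (k l : ℕ) (hl : 1 ≤ l) (hlk : l ≤ k) (hm : 6 ≤ k + l)
    {V : Type} [Fintype V] (A : V → V → Prop) (hopp : ∀ u v, A u v → ¬ A v u)
    (hn : 1 ≤ Fintype.card V) (hvert : ∀ v : V, OPT k l ≤ sVert k l A v) (x : V)
    (hx : x ∈ bigX A) : 2 / 3 ≤ rho A x := by
  have hn' : (0 : ℝ) < Fintype.card V := by exact_mod_cast hn
  have h := vert_bound k l hl hlk A hopp hn hvert x
  have h0 : sCond k l A 0 x ≤ lam0 k l * rho A x ^ (k + l) := by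
    have hc := center_count k l A Set.univ x
    simp only [Set.mem_univ, implies_true, and_true] at hc
    have hc' : (cnt (fun φ => IsStarEmb k l A φ ∧ φ 0 = x) : ℝ) ≤
      (dp A Set.univ x : ℝ) ^ k * (dm A Set.univ x : ℝ) ^ l := by exact_mod_cast hc
    have ha := amgm' k l (dp A Set.univ x) (dm A Set.univ x) _ (by positivity) (by positivity)
      (by omega) (le_refl _)
    unfold sCond
    unfold cnt at hc'
    rw [rho_eq A hopp, div_pow, ← mul_div_assoc]
    gcongr
    exact hc'.trans ha
  apply step1 (k + l) hm _ hx
  have hl0 := lam0_pos k l hl hlk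
  push_cast
  refine le_of_mul_le_mul_left ?_ hl0
  rw [mul_add]
  linarith

theorem gamma_big (k l : ℕ) (hl : 1 ≤ l) (hlk : l ≤ k) (hm : 6 ≤ k + l)
    {V : Type} [Fintype V] (A : V → V → Prop) (hopp : ∀ u v, A u v → ¬ A v u)
    (hn : 1 ≤ Fintype.card V) (hvert : ∀ v : V, OPT k l ≤ sVert k l A v) (x : V)
    (hx : x ∈ bigX A) :
    (Nat.card (bigX A) : ℝ) ≤ ((k + l - 1 : ℕ) : ℝ) * (dm A (bigX A)ᶜ x : ℝ) := by
  by_contra hcon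
  push Not at hcon
  have hn' : (0 : ℝ) < Fintype.card V := by exact_mod_cast hn
  set n : ℝ := ((Fintype.card V : ℕ) : ℝ) with hnn
  have hl0 := lam0_pos k l hl hlk
  have h := vert_bound k l hl hlk A hopp hn hvert x
  have hr := rho_big k l hl hlk hm A hopp hn hvert
  have hT : ∀ y ∈ bigX A, (tz A Set.univ y : ℝ) ≤ n / 3 := by
    intro y hy
    rw [tz_univ A hopp hn]
    have := hr y hy
    rw [← hnn]
    nlinarith
  have hc := center_split k l hl hlk A hopp (bigX A) (n / 3) (by positivity) hT x
  have hdX : (dp A (bigX A) x : ℝ) + dm A (bigX A) x ≤ n := by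
    have h1 := deg_sum A hopp (bigX A) x
    have h2 := card_split (bigX A)
    have : dp A (bigX A) x + dm A (bigX A) x ≤ Fintype.card V := by omega
    rw [hnn]
    exact_mod_cast this
  have hYs : (dp A (bigX A)ᶜ x : ℝ) + dm A (bigX A)ᶜ x + Nat.card (bigX A) ≤ n := by
    have h1 := deg_sum A hopp (bigX A)ᶜ x
    have h2 := card_split (bigX A)
    have : dp A (bigX A)ᶜ x + dm A (bigX A)ᶜ x + Nat.card (bigX A) ≤ Fintype.card V := by omega
    rw [hnn]
    exact_mod_cast this
  set a : ℝ := ((dp A (bigX A)ᶜ x : ℕ) : ℝ) with haa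
  set g : ℝ := ((dm A (bigX A)ᶜ x : ℕ) : ℝ) with hgg
  have ha0 : 0 ≤ a := by positivity
  have hg0 : 0 ≤ g := by positivity
  have hN : n ^ (k + l) = n ^ (k + l - 1) * n := by rw [← pow_succ]; congr 1; omega
  have hmm : (6 : ℝ) ≤ (k : ℝ) + l := by exact_mod_cast hm
  have hn2 := num2 (k + l) hm
  push_cast at hn2
  -- the center term
  have hs : sCond k l A 0 x ≤ a ^ k * g ^ l / n ^ (k + l) +
      lam0 k l * (Real.exp 1 * (6 / 243)) := by
    unfold sCond
    unfold cnt at hc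
    rw [← hnn, div_le_iff₀ (by positivity), add_mul, div_mul_cancel₀ _ (by positivity)]
    refine hc.trans ?_
    refine add_le_add (le_refl _) ?_
    calc Real.exp 1 * ((k : ℝ) + l) * lam0 k l * (dp A (bigX A) x + dm A (bigX A) x)
          * (n / 3) ^ (k + l - 1)
        ≤ Real.exp 1 * ((k : ℝ) + l) * lam0 k l * n * (n / 3) ^ (k + l - 1) := by gcongr
      _ = lam0 k l * (Real.exp 1 * (((k : ℝ) + l) * (1 / 3) ^ (k + l - 1))) * n ^ (k + l) := by
          rw [hN, div_eq_mul_one_div n 3, mul_pow]; ring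
      _ ≤ _ := by gcongr
  have hleaf : lam0 k l * (Real.exp 1 * ((k : ℝ) + l) * (rho A x * (1 - rho A x) ^ (k + l - 1)))
      ≤ lam0 k l * (Real.exp 1 * (6 / 243)) := by
    have h1 : rho A x ≤ 1 := by
      have := tz_univ A hopp hn x
      have h0 : (0 : ℝ) ≤ tz A Set.univ x := by positivity
      rw [this] at h0
      have := nonneg_of_mul_nonneg_left h0 hn'
      linarith
    have h2 := hr x hx
    have h3 : rho A x * (1 - rho A x) ^ (k + l - 1) ≤ 1 * (1 / 3) ^ (k + l - 1) := by
      have : 0 ≤ 1 - rho A x := by linarith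
      gcongr
      linarith
    rw [mul_assoc (Real.exp 1)]
    gcongr
    refine le_trans ?_ hn2
    gcongr
    linarith
  -- AM-GM upper bound
  have hup : ((k : ℝ) + l) * (a ^ k * g ^ l) ≤ lam0 k l * n ^ (k + l) := by
    have e : ((k + l - 1 : ℕ) : ℝ) = (k : ℝ) + l - 1 := by
      rw [Nat.cast_sub (by omega)]; push_cast; ring
    rw [e] at hcon
    have h1 := amgm' k l a (((k : ℝ) + l) * g) n ha0 (by positivity) (by omega) (by linarith)
    have h2 : ((k : ℝ) + l) ≤ ((k : ℝ) + l) ^ l := le_self_pow₀ (by linarith) (by omega)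
    calc ((k : ℝ) + l) * (a ^ k * g ^ l) ≤ ((k : ℝ) + l) ^ l * (a ^ k * g ^ l) := by gcongr
      _ = a ^ k * (((k : ℝ) + l) * g) ^ l := by rw [mul_pow]; ring
      _ ≤ _ := h1
  have hup2 : a ^ k * g ^ l / n ^ (k + l) ≤ lam0 k l * (1 / 6) := by
    rw [div_le_iff₀ (by positivity)]
    have : 6 * (a ^ k * g ^ l) ≤ ((k : ℝ) + l) * (a ^ k * g ^ l) := by gcongr
    linarith
  have hfin : lam0 k l * (1 / Real.exp 1) ≤
      lam0 k l * (1 / 6 + 2 * (Real.exp 1 * (6 / 243))) := by linarith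
  have hfin2 := le_of_mul_le_mul_left hfin hl0
  have h1 := inv_e
  have h2 := Real.exp_one_lt_d9
  norm_num at h1 h2 hfin2
  linarith

end

end StarAux

theorem stmt19 (k l : ℕ) (hl : 1 ≤ l) (hlk : l ≤ k) (hm : 6 ≤ k + l)
    (V : Type) [Fintype V] (A : V → V → Prop)
    (hirr : Irreflexive A) (hopp : ∀ u v, A u v → ¬ A v u) (hn : 1 ≤ Fintype.card V)
    (hvert : ∀ v : V, OPT k l ≤ sVert k l A v)
    (hX : (bigX A).Nonempty) (hY : (bigY A).Nonempty) :
    (((k : ℝ) - 1) ^ (k - 1) * (l : ℝ) ^ l / ((k : ℝ) + l - 1) ^ (k + l - 1))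
        * (1 - dXY A) * alphaX A ^ (k + l) * (1 - alphaX A)
      ≥ starProbOn k l A
          (fun φ => φ 0 ∈ bigY A ∧ ∀ a : Fin (k + l + 1), a ≠ 0 → φ a ∈ bigX A)
        + starProbOn k l A (fun φ => ∀ a, φ a ∈ bigX A) := by
  classical
  have hn' : (0 : ℝ) < Fintype.card V := by exact_mod_cast hn
  set n : ℝ := ((Fintype.card V : ℕ) : ℝ) with hnn
  set N : ℝ := (Nat.card (bigX A) : ℝ) with hNN
  have hNpos : 0 < N := by
    have : Nonempty (bigX A) := hX.to_subtype
    have : 0 < Nat.card (bigX A) := Nat.card_pos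
    rw [hNN]
    exact_mod_cast this
  have hNlt : N < n := by
    have : Nonempty ((bigX A)ᶜ : Set V) := hY.to_subtype
    have h1 : 0 < Nat.card ((bigX A)ᶜ : Set V) := Nat.card_pos
    have h2 := StarAux.card_split (bigX A)
    have : Nat.card (bigX A) < Fintype.card V := by omega
    rw [hNN, hnn]
    exact_mod_cast this
  have hal : alphaX A = N / n := rfl
  have h1al : 1 - N / n ≠ 0 := by
    have : N / n < 1 := by rw [div_lt_one hn']; exact hNlt
    linarith
  have hpw : ∀ w ∈ bigX A, (StarAux.dm A Set.univ w : ℝ) *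
      (StarAux.kapO k l * (StarAux.tz A (bigX A) w : ℝ) ^ (k + l - 1)) ≤
      StarAux.kapO k l * ((StarAux.dm A (bigX A)ᶜ w : ℝ) * N ^ (k + l - 1)) := by
    intro w hw
    have hg := StarAux.gamma_big k l hl hlk hm A hopp hn hvert w hw
    have hs : (StarAux.dm A (bigX A) w : ℝ) + StarAux.tz A (bigX A) w ≤ N := by
      have := StarAux.deg_sum A hopp (bigX A) w
      have : StarAux.dm A (bigX A) w + StarAux.tz A (bigX A) w ≤ Nat.card (bigX A) := by omega
      rw [hNN]
      exact_mod_cast this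
    have := StarAux.pointwise (k + l - 1) N (StarAux.dm A (bigX A)ᶜ w) (StarAux.dm A (bigX A) w)
      (StarAux.tz A (bigX A) w) hNpos hg (by positivity) hs (by positivity)
    rw [StarAux.dm_split A (bigX A) w]
    push_cast
    have hk := StarAux.kapO_nonneg k l hl hlk
    calc _ = StarAux.kapO k l * (((StarAux.dm A (bigX A) w : ℝ) + StarAux.dm A (bigX A)ᶜ w)
          * (StarAux.tz A (bigX A) w : ℝ) ^ (k + l - 1)) := by ring
      _ ≤ _ := by gcongr
  -- counting
  have hone := StarAux.one_mem hl hlk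
  have hcount : (StarAux.cnt (fun φ => IsStarEmb k l A φ ∧ ∀ a, a ≠ 0 → φ a ∈ bigX A) : ℝ) ≤
      StarAux.kapO k l * ((∑ w ∈ Finset.univ.filter (fun w => w ∈ bigX A),
        (StarAux.dm A (bigX A)ᶜ w : ℝ)) * N ^ (k + l - 1)) := by
    rw [StarAux.cnt_fiber _ 1, Finset.sum_mul, Finset.mul_sum, Finset.sum_filter]
    push_cast
    apply Finset.sum_le_sum
    intro w _
    split_ifs with hw
    · refine le_trans ?_ (hpw w hw)
      refine le_trans ?_ (StarAux.leafO_sum k l hl hlk A hopp (bigX A) w 1 hone)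
      exact_mod_cast StarAux.cnt_mono (by tauto)
    · rw [StarAux.cnt_zero]; simp
      rintro φ ⟨⟨h, hZ⟩, h1⟩
      exact hw (h1 ▸ hZ 1 (StarAux.ne_zero_OL hone))
  have hadd : starProbOn k l A
          (fun φ => φ 0 ∈ bigY A ∧ ∀ a : Fin (k + l + 1), a ≠ 0 → φ a ∈ bigX A)
        + starProbOn k l A (fun φ => ∀ a, φ a ∈ bigX A) ≤
      (StarAux.cnt (fun φ => IsStarEmb k l A φ ∧ ∀ a, a ≠ 0 → φ a ∈ bigX A) : ℝ)
        / n ^ (k + l + 1) := by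
    unfold starProbOn
    rw [← add_div]
    gcongr
    have h1 := StarAux.cnt_add_disj
      (fun φ => IsStarEmb k l A φ ∧ (φ 0 ∈ bigY A ∧ ∀ a : Fin (k + l + 1), a ≠ 0 → φ a ∈ bigX A))
      (fun φ => IsStarEmb k l A φ ∧ ∀ a, φ a ∈ bigX A)
      (by
        rintro φ ⟨_, h0, _⟩ ⟨_, h⟩
        exact h0 (h 0))
    have h2 : StarAux.cnt (fun φ => (IsStarEmb k l A φ ∧
          (φ 0 ∈ bigY A ∧ ∀ a : Fin (k + l + 1), a ≠ 0 → φ a ∈ bigX A)) ∨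
          (IsStarEmb k l A φ ∧ ∀ a, φ a ∈ bigX A)) ≤
        StarAux.cnt (fun φ => IsStarEmb k l A φ ∧ ∀ a, a ≠ 0 → φ a ∈ bigX A) := by
      apply StarAux.cnt_mono
      rintro φ (⟨h, _, hh⟩ | ⟨h, hh⟩)
      · exact ⟨h, hh⟩
      · exact ⟨h, fun a _ => hh a⟩
    rw [← h1] at h2
    exact_mod_cast h2
  refine le_trans hadd ?_
  rw [div_le_iff₀ (by positivity)]
  refine hcount.trans (le_of_eq ?_)
  have hsum : (∑ᶠ x ∈ bigX A, rhoMIn A (bigY A) x) =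
      (∑ w ∈ Finset.univ.filter (fun w => w ∈ bigX A), (StarAux.dm A (bigX A)ᶜ w : ℝ)) / n := by
    rw [finsum_mem_eq_finite_toFinset_sum _ (Set.toFinite _), Finset.sum_div]
    apply Finset.sum_congr
    · ext; simp
    · intro x _
      exact StarAux.rhoMIn_eq A (bigY A) x
  unfold dXY
  rw [hsum, hal, ← hNN]
  set W := ∑ w ∈ Finset.univ.filter (fun w => w ∈ bigX A), (StarAux.dm A (bigX A)ᶜ w : ℝ)
  change StarAux.kapO k l * (W * N ^ (k + l - 1)) =
    StarAux.kapO k l * (1 - (1 - W / n / N / (1 - N / n))) * (N / n) ^ (k + l) * (1 - N / n)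
      * n ^ (k + l + 1)
  have e1 : N ^ (k + l) = N ^ (k + l - 1) * N := by rw [← pow_succ]; congr 1; omega
  rw [div_pow, pow_succ n, e1]
  set q := 1 - N / n
  field_simp
  ring
end
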